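/- Let G be a countably infinite discrete amenable group, X an infinite compact metrizable space, and α: G ↷ X a minimal free continuous action such that E_G(X) is compact and zero-dimensional in the weak* topology. If α has dynamical m-comparison for some m ∈ ℕ, then α is almost finite. -/

import Mathlib

open MeasureTheory Set Pointwise

variable (G X : Type*)

section Defs

variable [Group G] [MetricSpace X] [MeasurableSpace X] [MulAction G X]

/-- A Borel probability measure is `G`-invariant. -/
def InvariantMeasure (μ : ProbabilityMeasure X) : Prop :=
  ∀ g : G, MeasureTheory.Measure.map (fun x => g • x) (μ : Measure X) = (μ : Measure X)

/-- `M_G(X)`: the set of `G`-invariant Borel probability measures on `X`. -/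
def MG : Set (ProbabilityMeasure X) := {μ | InvariantMeasure G X μ}

/-- `E_G(X)`: the set of ergodic `G`-invariant Borel probability measures on `X`,
i.e. invariant measures giving every `G`-invariant Borel set measure `0` or `1`. -/
def EG : Set (ProbabilityMeasure X) :=
  {μ | InvariantMeasure G X μ ∧
    ∀ A : Set X, MeasurableSet A → (∀ g : G, g • A = A) → μ A = 0 ∨ μ A = 1}

/-- The action of `G` on `X` is free. -/
def FreeAction : Prop := ∀ (g : G) (x : X), g • x = x → g = 1

/-- The action of `G` on `X` is minimal: there is no proper nonempty closed invariant subset. -/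
def MinimalAction : Prop :=
  ∀ C : Set X, IsClosed C → (∀ g : G, g • C ⊆ C) → C = ∅ ∨ C = Set.univ

/-- The small boundary property. -/
def SmallBoundaryProperty : Prop :=
  ∀ (x : X) (U : Set X), IsOpen U → x ∈ U →
    ∃ V : Set X, IsOpen V ∧ x ∈ V ∧ V ⊆ U ∧ ∀ μ ∈ MG G X, μ (frontier V) = 0

/-- `S` is a `(K,δ)`-invariant finite subset of `G`. -/
def FolnerInv (K : Finset G) (δ : ℝ) (S : Finset G) : Prop :=
  (1 - δ) * (S.card : ℝ) ≤ ({s | s ∈ S ∧ ∀ k ∈ K, k * s ∈ S} : Set G).ncard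

/-- `G` is amenable: it admits `(K,δ)`-invariant nonempty finite subsets for all `K, δ`. -/
def AmenableGroup : Prop :=
  ∀ (K : Finset G) (δ : ℝ), 0 < δ → ∃ S : Finset G, S.Nonempty ∧ FolnerInv G K δ S

/-- `(S, V)` is a tower: the translates `s • V`, `s ∈ S`, are pairwise disjoint. -/
def IsTower (S : Finset G) (V : Set X) : Prop :=
  (S : Set G).Pairwise fun s t => Disjoint (s • V) (t • V)

/-- `F ≺_m O`: subordination with `m`-colored multiplicity. -/
def SubordinateM (m : ℕ) (F O : Set X) : Prop :=
  ∃ (n : ℕ) (U : Fin n → Set X) (s : Fin n → G) (c : Fin n → Fin (m + 1)),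
    (∀ k, IsOpen (U k)) ∧ F ⊆ ⋃ k, U k ∧ (∀ k, s k • U k ⊆ O) ∧
    ∀ k l, k ≠ l → c k = c l → Disjoint (s k • U k) (s l • U l)

/-- The action has dynamical `m`-comparison. -/
def HasMComparison (m : ℕ) : Prop :=
  ∀ F O : Set X, IsClosed F → IsOpen O →
    (∀ μ ∈ MG G X, μ F < μ O) → SubordinateM G X m F O

/-- The action is `m`-almost finite. -/
def MAlmostFinite (m : ℕ) : Prop :=
  ∀ (n : ℕ), 1 ≤ n → ∀ (K : Finset G) (δ : ℝ), 0 < δ →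
    ∃ (I : ℕ) (S : Fin I → Finset G) (V : Fin I → Set X) (c : Fin I → Fin (m + 1))
      (S' : Fin I → Finset G),
      (∀ i, IsOpen (V i)) ∧
      (∀ i, IsTower G X (S i) (closure (V i))) ∧
      (∀ i, FolnerInv G K δ (S i)) ∧
      (∀ i, ∀ s ∈ S i, Metric.diam (s • closure (V i)) < δ) ∧
      (∀ i j, i ≠ j → c i = c j →
        Disjoint ((S i : Set G) • closure (V i)) ((S j : Set G) • closure (V j))) ∧
      (∀ i, S' i ⊆ S i) ∧ (∀ i, ((S' i).card : ℝ) ≤ (S i).card / n) ∧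
      SubordinateM G X 0 (Set.univ \ ⋃ i, (S i : Set G) • V i) (⋃ i, (S' i : Set G) • V i)

end Defs

section OW
set_option linter.unusedSectionVars false
variable {G : Type*} {X : Type*} [Group G] [MetricSpace X] [MulAction G X]

/-- Injectivity form of the towers forming a castle. -/
def CastleInj {ι : Type*} (S : ι → Finset G) (V : ι → Set X) : Prop :=
  ∀ i j, ∀ s ∈ S i, ∀ t ∈ S j, ∀ x ∈ V i, ∀ y ∈ V j, s • x = t • y → i = j ∧ s = t

/-- A Borel castle with shapes `S i` that are large subsets of the quasi-tiles `F i`. -/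
structure Quasi [MeasurableSpace X] (ε δ₀ : ℝ) (P : Finset G → Prop) {ι : Type*}
    (S F : ι → Finset G) (V : ι → Set X) (C : Set X) : Prop where
  meas : ∀ i, MeasurableSet (V i)
  inj : CastleInj S V
  sub : ∀ i, S i ⊆ F i
  card : ∀ i, (1 - ε) * ((F i).card : ℝ) ≤ ((S i).card : ℝ)
  prop : ∀ i, P (F i)
  small : ∀ i, ∀ s ∈ F i, ∀ x ∈ V i, ∀ y ∈ V i, dist (s • x) (s • y) ≤ δ₀
  cov : C = ⋃ i, ⋃ s ∈ S i, s • V i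
  full : ∀ i, ∀ f ∈ F i, ∀ x ∈ V i, f • x ∈ C

/-- There is a quasi-castle with covered set `C`. -/
def HasQuasi [MeasurableSpace X] (ε δ₀ : ℝ) (P : Finset G → Prop) (C : Set X) : Prop :=
  ∃ (N : ℕ) (S F : Fin N → Finset G) (V : Fin N → Set X), Quasi ε δ₀ P S F V C

theorem HasQuasi.of_fintype [MeasurableSpace X] {ε δ₀ : ℝ} {P : Finset G → Prop} {C : Set X}
    {ι : Type*} [Fintype ι] {S F : ι → Finset G} {V : ι → Set X} (h : Quasi ε δ₀ P S F V C) :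
    HasQuasi ε δ₀ P C := by
  let e := (Fintype.equivFin ι).symm
  refine ⟨_, S ∘ e, F ∘ e, V ∘ e, ?_⟩
  refine ⟨fun i => h.meas _, ?_, fun i => h.sub _, fun i => h.card _, fun i => h.prop _,
    fun i => h.small _, ?_, fun i => h.full _⟩
  · intro i j s hs t ht x hx y hy hxy
    have := h.inj (e i) (e j) s hs t ht x hx y hy hxy
    exact ⟨e.injective this.1, this.2⟩
  · rw [h.cov]
    exact (e.surjective.iUnion_comp (fun i => ⋃ s ∈ S i, s • V i)).symm

variable [MeasurableSpace X] [BorelSpace X] [ContinuousConstSMul G X]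

theorem Quasi.measC {ε δ₀ : ℝ} {P : Finset G → Prop} {C : Set X}
    {ι : Type*} [Fintype ι] {S F : ι → Finset G} {V : ι → Set X} (h : Quasi ε δ₀ P S F V C) :
    MeasurableSet C := by
  rw [h.cov]
  exact MeasurableSet.iUnion fun i => Finset.measurableSet_biUnion _ fun s _ =>
    (h.meas i).const_smul s

theorem HasQuasi.measC {ε δ₀ : ℝ} {P : Finset G → Prop} {C : Set X} (h : HasQuasi ε δ₀ P C) :
    MeasurableSet C := by
  obtain ⟨N, S, F, V, h⟩ := h
  exact h.measC

open Classical in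
theorem HasQuasi.step {ε δ₀ : ℝ} (hε : ε ≤ 1) {P : Finset G → Prop} {C : Set X}
    (h : HasQuasi ε δ₀ P C) (F : Finset G) (hF : P F) (B : Set X) (hB : MeasurableSet B)
    (hinj : ∀ s ∈ F, ∀ t ∈ F, ∀ x ∈ B, ∀ y ∈ B, s • x = t • y → s = t)
    (hsmall : ∀ s ∈ F, ∀ x ∈ B, ∀ y ∈ B, dist (s • x) (s • y) ≤ δ₀) :
    ∃ C', C ⊆ C' ∧ HasQuasi ε δ₀ P C' ∧
      ∀ x ∈ B, ε * (F.card : ℝ) ≤ ((F.filter fun f => f • x ∈ C').card : ℝ) := by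
  have hC := h.measC
  obtain ⟨N, S, F₀, V, h⟩ := h
  let J := {T : Finset G // T ∈ F.powerset.filter fun T => (1 - ε) * (F.card : ℝ) ≤ (T.card : ℝ)}
  have hJ : ∀ T : J, T.1 ⊆ F ∧ (1 - ε) * (F.card : ℝ) ≤ (T.1.card : ℝ) := by
    intro T
    have := Finset.mem_filter.1 T.2
    exact ⟨Finset.mem_powerset.1 this.1, this.2⟩
  have : Fintype J := Finset.Subtype.fintype _
  let W : J → Set X := fun T => {x | x ∈ B ∧ (F.filter fun f => f • x ∉ C) = T.1}
  obtain ⟨C', hC'⟩ : ∃ C' : Set X, C' = C ∪ ⋃ T : J, ⋃ s ∈ T.1, s • W T := ⟨_, rfl⟩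
  have hCC' : C ⊆ C' := hC' ▸ subset_union_left
  have hWC' : ∀ T : J, ∀ s ∈ T.1, ∀ x ∈ W T, s • x ∈ C' := by
    intro T s hs x hx
    rw [hC']
    refine Or.inr ?_
    simp only [mem_iUnion]
    exact ⟨T, s, hs, smul_mem_smul_set hx⟩
  have hfull : ∀ T : J, ∀ s ∈ F, ∀ x ∈ W T, s • x ∈ C' := by
    intro T s hs x hx
    by_cases hsx : s • x ∈ C
    · exact hCC' hsx
    · refine hWC' T s ?_ x hx
      rw [← hx.2]
      simp [hs, hsx]
  have hnot : ∀ T : J, ∀ s ∈ T.1, ∀ x ∈ W T, s • x ∉ C := by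
    intro T s hs x hx
    rw [← hx.2] at hs
    exact (Finset.mem_filter.1 hs).2
  have hVC : ∀ i, ∀ s ∈ S i, ∀ x ∈ V i, s • x ∈ C := by
    intro i s hs x hx
    exact h.full i s (h.sub i hs) x hx
  refine ⟨C', hCC', ?_, ?_⟩
  · refine HasQuasi.of_fintype (ι := Fin N ⊕ J) (S := Sum.elim S (fun T => T.1))
      (F := Sum.elim F₀ (fun _ => F)) (V := Sum.elim V W) ?_
    refine ⟨?_, ?_, ?_, ?_, ?_, ?_, ?_, ?_⟩
    · rintro (i | T)
      · exact h.meas i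
      · have : W T = B ∩ ⋂ f ∈ F, {x | f • x ∉ C ↔ f ∈ T.1} := by
          ext x
          simp only [W, mem_ofPred_eq, mem_inter_iff, mem_iInter]
          refine and_congr_right fun _ => ?_
          constructor
          · intro hx f hf
            rw [← hx]
            simp [hf]
          · intro hx
            ext f
            rw [Finset.mem_filter]
            constructor
            · rintro ⟨hf, hfx⟩
              exact (hx f hf).1 hfx
            · intro hf
              exact ⟨(hJ T).1 hf, (hx f ((hJ T).1 hf)).2 hf⟩
        change MeasurableSet (W T)
        rw [this]
        refine hB.inter (Finset.measurableSet_biInter _ fun f _ => ?_)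
        have hm : MeasurableSet {x : X | f • x ∉ C} :=
          ((continuous_const_smul f).measurable hC).compl
        by_cases hfT : f ∈ T.1
        · simpa [hfT] using hm
        · have he : {x : X | f • x ∉ C ↔ f ∈ T.1} = (fun x => f • x) ⁻¹' C := by
            ext x; simp [hfT]
          rw [he]
          exact (continuous_const_smul f).measurable hC
    · rintro (i | T) (j | T') s hs t ht x hx y hy hxy
      · have := h.inj i j s hs t ht x hx y hy hxy
        exact ⟨congrArg _ this.1, this.2⟩
      · exact absurd (hxy ▸ hVC i s hs x hx) (hnot T' t ht y hy)
      · exact absurd (hxy.symm ▸ hVC j t ht y hy) (hnot T s hs x hx)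
      · have hst : s = t := hinj s ((hJ T).1 hs) t ((hJ T').1 ht) x hx.1 y hy.1 hxy
        subst hst
        have hxy' : x = y := smul_left_cancel s hxy
        subst hxy'
        refine ⟨congrArg _ (Subtype.ext ?_), rfl⟩
        rw [← hx.2, ← hy.2]
    · rintro (i | T)
      · exact h.sub i
      · exact (hJ T).1
    · rintro (i | T)
      · exact h.card i
      · exact (hJ T).2
    · rintro (i | T)
      · exact h.prop i
      · exact hF
    · rintro (i | T)
      · exact h.small i
      · intro s hs x hx y hy
        exact hsmall s hs x hx.1 y hy.1
    · rw [hC', iUnion_sum]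
      conv_lhs => rw [h.cov]
      rfl
    · rintro (i | T)
      · intro f hf x hx
        exact hCC' (h.full i f hf x hx)
      · exact hfull T
  · intro x hx
    by_cases hT : (1 - ε) * (F.card : ℝ) ≤ ((F.filter fun f => f • x ∉ C).card : ℝ)
    · have hall : (F.filter fun f => f • x ∈ C') = F := by
        refine Finset.filter_true_of_mem fun f hf => ?_
        exact hfull ⟨F.filter fun f => f • x ∉ C, by
          rw [Finset.mem_filter, Finset.mem_powerset]
          exact ⟨Finset.filter_subset _ _, hT⟩⟩ f hf x ⟨hx, rfl⟩
      rw [hall]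
      have : (0 : ℝ) ≤ F.card := by positivity
      nlinarith
    · have h1 : (F.filter fun f => f • x ∈ C).card + (F.filter fun f => f • x ∉ C).card = F.card :=
        Finset.card_filter_add_card_filter_not _
      have h2 : (F.filter fun f => f • x ∈ C).card ≤ (F.filter fun f => f • x ∈ C').card := by
        refine Finset.card_le_card (Finset.monotone_filter_right _ ?_)
        intro f _ hf
        exact hCC' hf
      have h1' : ((F.filter fun f => f • x ∈ C).card : ℝ) +
        ((F.filter fun f => f • x ∉ C).card : ℝ) = F.card := by exact_mod_cast h1
      have h2' : ((F.filter fun f => f • x ∈ C).card : ℝ) ≤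
        ((F.filter fun f => f • x ∈ C').card : ℝ) := by exact_mod_cast h2
      linarith

open Classical in
theorem HasQuasi.steps {ε δ₀ : ℝ} (hε : ε ≤ 1) {P : Finset G → Prop}
    (F : Finset G) (hF : P F) {κ : Type*} (B : κ → Set X) (hB : ∀ k, MeasurableSet (B k))
    (hinj : ∀ k, ∀ s ∈ F, ∀ t ∈ F, ∀ x ∈ B k, ∀ y ∈ B k, s • x = t • y → s = t)
    (hsmall : ∀ k, ∀ s ∈ F, ∀ x ∈ B k, ∀ y ∈ B k, dist (s • x) (s • y) ≤ δ₀) (l : Finset κ) :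
    ∀ {C : Set X}, HasQuasi ε δ₀ P C →
    ∃ C', C ⊆ C' ∧ HasQuasi ε δ₀ P C' ∧
      ∀ k ∈ l, ∀ x ∈ B k, ε * (F.card : ℝ) ≤ ((F.filter fun f => f • x ∈ C').card : ℝ) := by
  induction l using Finset.induction_on with
  | empty => intro C h; exact ⟨C, subset_rfl, h, by simp⟩
  | insert a l _ ih =>
    intro C h
    obtain ⟨C₁, h1, h2, h3⟩ := ih h
    obtain ⟨C₂, h4, h5, h6⟩ := h2.step hε F hF (B a) (hB a) (hinj a) (hsmall a)
    refine ⟨C₂, h1.trans h4, h5, ?_⟩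
    intro k hk x hx
    rcases Finset.mem_insert.1 hk with rfl | hk
    · exact h6 x hx
    · refine (h3 k hk x hx).trans ?_
      have : (F.filter fun f => f • x ∈ C₁).card ≤ (F.filter fun f => f • x ∈ C₂).card := by
        refine Finset.card_le_card (Finset.monotone_filter_right _ ?_)
        intro f _ hf
        exact h4 hf
      exact_mod_cast this

/-- Small neighbourhoods on which finitely many translates are disjoint. -/
theorem exists_small_nhd (hfree : FreeAction G X) (F : Finset G) {δ₀ : ℝ} (hδ : 0 < δ₀) (x : X) :
    ∃ U : Set X, IsOpen U ∧ x ∈ U ∧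
      (∀ s ∈ F, ∀ t ∈ F, ∀ y ∈ U, ∀ z ∈ U, s • y = t • z → s = t) ∧
      (∀ s ∈ F, ∀ y ∈ U, ∀ z ∈ U, dist (s • y) (s • z) ≤ δ₀) := by
  classical
  have h1 : ∀ p : G × G, ∃ U : Set X, IsOpen U ∧ x ∈ U ∧
      ∀ y ∈ U, ∀ z ∈ U, p.1 • y = p.2 • z → p.1 = p.2 := by
    rintro ⟨s, t⟩
    by_cases hst : s = t
    · exact ⟨univ, isOpen_univ, mem_univ _, fun _ _ _ _ _ => hst⟩
    · have hne : s • x ≠ t • x := by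
        intro h
        apply hst
        have : (t⁻¹ * s) • x = x := by rw [mul_smul, h, inv_smul_smul]
        have := hfree _ _ this
        exact (inv_mul_eq_one.1 this).symm
      obtain ⟨U, V, hU, hV, hxU, hxV, hUV⟩ := t2_separation hne
      refine ⟨(fun y => s • y) ⁻¹' U ∩ (fun y => t • y) ⁻¹' V,
        (hU.preimage (continuous_const_smul s)).inter (hV.preimage (continuous_const_smul t)),
        ⟨hxU, hxV⟩, ?_⟩
      intro y hy z hz hyz
      exact absurd hyz (hUV.ne_of_mem hy.1 hz.2)
  choose U hUo hxU hU using h1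
  refine ⟨(⋂ p ∈ F ×ˢ F, U p) ∩ ⋂ s ∈ F, (fun y => s • y) ⁻¹' Metric.ball (s • x) (δ₀ / 2),
    ?_, ?_, ?_, ?_⟩
  · exact (isOpen_biInter_finset fun p _ => hUo p).inter
      (isOpen_biInter_finset fun s _ => Metric.isOpen_ball.preimage (continuous_const_smul s))
  · simp [hxU, hδ]
  · intro s hs t ht y hy z hz h
    have hp : (s, t) ∈ F ×ˢ F := Finset.mk_mem_product hs ht
    exact hU (s, t) y (mem_iInter₂.1 hy.1 _ hp) z (mem_iInter₂.1 hz.1 _ hp) h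
  · intro s hs y hy z hz
    have h1 := mem_iInter₂.1 hy.2 s hs
    have h2 := mem_iInter₂.1 hz.2 s hs
    simp only [mem_preimage, Metric.mem_ball] at h1 h2
    have := dist_triangle_right (s • y) (s • z) (s • x)
    linarith

open Classical in
theorem HasQuasi.stage [CompactSpace X] (hfree : FreeAction G X)
    {ε δ₀ : ℝ} (hε : ε ≤ 1) (hδ : 0 < δ₀) {P : Finset G → Prop}
    (F : Finset G) (hF : P F) {C : Set X} (h : HasQuasi ε δ₀ P C) :
    ∃ C', C ⊆ C' ∧ HasQuasi ε δ₀ P C' ∧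
      ∀ x, ε * (F.card : ℝ) ≤ ((F.filter fun f => f • x ∈ C').card : ℝ) := by
  choose U hUo hxU hU1 hU2 using exists_small_nhd (X := X) hfree F hδ
  obtain ⟨l, hl⟩ := isCompact_univ.elim_finite_subcover U hUo
    (fun x _ => mem_iUnion.2 ⟨x, hxU x⟩)
  obtain ⟨C', h1, h2, h3⟩ := HasQuasi.steps hε F hF U (fun k => (hUo k).measurableSet)
    hU1 hU2 l h
  refine ⟨C', h1, h2, fun x => ?_⟩
  obtain ⟨k, hk, hx⟩ := mem_iUnion₂.1 (hl (mem_univ x))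
  exact h3 k hk x hx

end OW

section OW2
set_option linter.unusedSectionVars false

section Folner
variable {G : Type*} [Group G]

open Classical in
theorem folnerInv_iff {K : Finset G} {δ : ℝ} {S : Finset G} :
    FolnerInv G K δ S ↔
      (1 - δ) * (S.card : ℝ) ≤ ((S.filter fun s => ∀ k ∈ K, k * s ∈ S).card : ℝ) := by
  unfold FolnerInv
  have : ({s | s ∈ S ∧ ∀ k ∈ K, k * s ∈ S} : Set G) =
      ((S.filter fun s => ∀ k ∈ K, k * s ∈ S : Finset G) : Set G) := by
    ext s; simp
  rw [this, Set.ncard_coe_finset]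

theorem FolnerInv.mono {K K' : Finset G} {δ δ' : ℝ} {S : Finset G} (h : FolnerInv G K' δ' S)
    (hK : K ⊆ K') (hδ : δ' ≤ δ) : FolnerInv G K δ S := by
  classical
  rw [folnerInv_iff] at h ⊢
  have h1 : (S.filter fun s => ∀ k ∈ K', k * s ∈ S).card ≤
      (S.filter fun s => ∀ k ∈ K, k * s ∈ S).card := by
    refine Finset.card_le_card (Finset.monotone_filter_right _ ?_)
    intro s _ hs k hk
    exact hs k (hK hk)
  have h2 : ((S.filter fun s => ∀ k ∈ K', k * s ∈ S).card : ℝ) ≤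
      ((S.filter fun s => ∀ k ∈ K, k * s ∈ S).card : ℝ) := by exact_mod_cast h1
  have : (0 : ℝ) ≤ S.card := by positivity
  nlinarith

theorem FolnerInv.card_le {K : Finset G} {δ : ℝ} {S : Finset G} (h : FolnerInv G K δ S)
    (hδ : δ < 1) (hS : S.Nonempty) : K.card ≤ S.card := by
  classical
  rw [folnerInv_iff] at h
  have h0 : (0 : ℝ) < S.card := by exact_mod_cast hS.card_pos
  have h1 : (0 : ℝ) < ((S.filter fun s => ∀ k ∈ K, k * s ∈ S).card : ℝ) := by nlinarith
  have h2 : 0 < (S.filter fun s => ∀ k ∈ K, k * s ∈ S).card := by exact_mod_cast h1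
  obtain ⟨s, hs⟩ := Finset.card_pos.1 h2
  have hs := (Finset.mem_filter.1 hs).2
  refine Finset.card_le_card_of_injOn (fun k => k * s) hs ?_
  intro a _ b _ hab
  exact mul_right_cancel hab

open Classical in
theorem FolnerInv.boundary {F : Finset G} {η : ℝ} {S : Finset G} (h : FolnerInv G F⁻¹ η S) :
    (((F⁻¹ * S) \ S).card : ℝ) ≤ F.card * (η * S.card) := by
  rw [folnerInv_iff] at h
  set A := S.filter fun s => ∀ k ∈ F⁻¹, k * s ∈ S with hA
  have h1 : (F⁻¹ * S) \ S ⊆ F⁻¹ * (S \ A) := by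
    intro g hg
    rw [Finset.mem_sdiff, Finset.mem_mul] at hg
    obtain ⟨⟨k, hk, s, hs, rfl⟩, hg⟩ := hg
    refine Finset.mul_mem_mul hk ?_
    rw [Finset.mem_sdiff]
    refine ⟨hs, fun hsA => hg ?_⟩
    exact (Finset.mem_filter.1 hsA).2 k hk
  have h2 : ((F⁻¹ * S) \ S).card ≤ F.card * (S \ A).card := by
    refine (Finset.card_le_card h1).trans (Finset.card_mul_le.trans ?_)
    rw [Finset.card_inv]
  have h3 : (S \ A).card + A.card = S.card :=
    Finset.card_sdiff_add_card_eq_card (Finset.filter_subset _ _)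
  have h3' : ((S \ A).card : ℝ) + A.card = S.card := by exact_mod_cast h3
  have h2' : (((F⁻¹ * S) \ S).card : ℝ) ≤ F.card * (S \ A).card := by exact_mod_cast h2
  refine h2'.trans ?_
  gcongr
  linarith

theorem FolnerInv.of_subset {K : Finset G} {δ ε : ℝ} {S F : Finset G} (h : FolnerInv G K (δ / 2) F)
    (hδ : δ ≤ 1) (hSF : S ⊆ F) (hc : (1 - ε) * (F.card : ℝ) ≤ (S.card : ℝ))
    (hε : (1 + K.card) * ε ≤ δ / 2) : FolnerInv G K δ S := by
  classical
  rw [folnerInv_iff] at h ⊢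
  have h1 : (F.filter fun s => ∀ k ∈ K, k * s ∈ F) ⊆
      (S.filter fun s => ∀ k ∈ K, k * s ∈ S) ∪ ((F \ S) ∪ K⁻¹ * (F \ S)) := by
    intro s hs
    obtain ⟨hsF, hs⟩ := Finset.mem_filter.1 hs
    by_cases h1 : s ∈ S
    · by_cases h2 : ∀ k ∈ K, k * s ∈ S
      · exact Finset.mem_union_left _ (Finset.mem_filter.2 ⟨h1, h2⟩)
      · push Not at h2
        obtain ⟨k, hk, hks⟩ := h2
        refine Finset.mem_union_right _ (Finset.mem_union_right _ ?_)
        have : s = k⁻¹ * (k * s) := by group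
        rw [this]
        exact Finset.mul_mem_mul (Finset.inv_mem_inv hk) (Finset.mem_sdiff.2 ⟨hs k hk, hks⟩)
    · exact Finset.mem_union_right _ (Finset.mem_union_left _ (Finset.mem_sdiff.2 ⟨hsF, h1⟩))
  have h2 : (F.filter fun s => ∀ k ∈ K, k * s ∈ F).card ≤
      (S.filter fun s => ∀ k ∈ K, k * s ∈ S).card + ((F \ S).card + K.card * (F \ S).card) := by
    refine (Finset.card_le_card h1).trans ((Finset.card_union_le _ _).trans ?_)
    gcongr
    refine (Finset.card_union_le _ _).trans ?_
    gcongr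
    refine Finset.card_mul_le.trans ?_
    rw [Finset.card_inv]
  have h3 : (F \ S).card + S.card = F.card := Finset.card_sdiff_add_card_eq_card hSF
  have h3' : ((F \ S).card : ℝ) + S.card = F.card := by exact_mod_cast h3
  have h2' : ((F.filter fun s => ∀ k ∈ K, k * s ∈ F).card : ℝ) ≤
      ((S.filter fun s => ∀ k ∈ K, k * s ∈ S).card : ℝ) +
        ((F \ S).card + K.card * (F \ S).card) := by exact_mod_cast h2
  have h4 : (S.card : ℝ) ≤ F.card := by exact_mod_cast Finset.card_le_card hSF
  have h5 : ((F \ S).card : ℝ) ≤ ε * F.card := by linarith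
  have h6 : (1 + K.card : ℝ) * (F \ S).card ≤ (δ / 2) * F.card := by
    calc (1 + K.card : ℝ) * (F \ S).card ≤ (1 + K.card : ℝ) * (ε * F.card) := by gcongr
      _ = ((1 + K.card) * ε) * F.card := by ring
      _ ≤ _ := by gcongr
  have h7 : (1 - δ) * (S.card : ℝ) ≤ (1 - δ) * F.card := by
    apply mul_le_mul_of_nonneg_left h4; linarith
  linarith

end Folner

variable {G : Type*} {X : Type*} [Group G] [MetricSpace X] [MulAction G X]
variable [MeasurableSpace X] [BorelSpace X] [ContinuousConstSMul G X]

theorem real_preimage {μ : Measure X} (hμ : ∀ g : G, μ.map (fun x => g • x) = μ)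
    (g : G) {A : Set X} (hA : MeasurableSet A) : μ.real ((fun x => g • x) ⁻¹' A) = μ.real A := by
  have := hμ g
  conv_rhs => rw [← this]
  rw [map_measureReal_apply (continuous_const_smul g).measurable hA]

theorem real_smul {μ : Measure X} (hμ : ∀ g : G, μ.map (fun x => g • x) = μ)
    (g : G) {A : Set X} (hA : MeasurableSet A) : μ.real (g • A) = μ.real A := by
  rw [← real_preimage hμ g⁻¹ hA, ← Set.preimage_smul_inv]

theorem castle_measure {μ : Measure X} [IsProbabilityMeasure μ]
    (hμ : ∀ g : G, μ.map (fun x => g • x) = μ) {ι : Type*} [Fintype ι]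
    {S : ι → Finset G} {V : ι → Set X} (hV : ∀ i, MeasurableSet (V i)) (h : CastleInj S V) :
    μ.real (⋃ i, ⋃ s ∈ S i, s • V i) = ∑ i, (S i).card * μ.real (V i) := by
  classical
  have h1 : (⋃ i, ⋃ s ∈ S i, s • V i) = ⋃ i ∈ (Finset.univ : Finset ι), ⋃ s ∈ S i, s • V i := by
    simp
  rw [h1, measureReal_biUnion_finset (h := fun _ _ => measure_ne_top _ _)]
  · refine Finset.sum_congr rfl fun i _ => ?_
    rw [measureReal_biUnion_finset (h := fun _ _ => measure_ne_top _ _)]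
    · rw [Finset.sum_congr rfl fun s _ => real_smul hμ s (hV i)]
      simp
    · intro s hs t ht hst
      refine Set.disjoint_left.2 ?_
      rintro _ ⟨x, hx, rfl⟩ ⟨y, hy, hxy⟩
      exact hst (h i i s hs t ht x hx y hy hxy.symm).2
    · intro s _
      exact (hV i).const_smul s
  · intro i _ j _ hij
    refine Set.disjoint_left.2 ?_
    intro z hz hz'
    simp only [mem_iUnion] at hz hz'
    obtain ⟨s, hs, x, hx, rfl⟩ := hz
    obtain ⟨t, ht, y, hy, hxy⟩ := hz'
    exact hij (h i j s hs t ht x hx y hy hxy.symm).1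
  · intro i _
    exact Finset.measurableSet_biUnion _ fun s _ => (hV i).const_smul s

open Classical in
theorem double_count {μ : Measure X} [IsProbabilityMeasure μ]
    (hμ : ∀ g : G, μ.map (fun x => g • x) = μ) (F : Finset G) {D E : Set X}
    (hD : MeasurableSet D) (hE : MeasurableSet E) (c : ℝ)
    (h : ∀ x ∈ D, c ≤ ((F.filter fun f => f • x ∈ E).card : ℝ)) :
    c * μ.real D ≤ F.card * μ.real E := by
  have hm : ∀ f : G, MeasurableSet ((fun x : X => f • x) ⁻¹' E) := fun f =>
    (continuous_const_smul f).measurable hE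
  have h1 : ∫ x, D.indicator (fun _ => c) x ∂μ ≤
      ∫ x, ∑ f ∈ F, ((fun x : X => f • x) ⁻¹' E).indicator (fun _ => (1 : ℝ)) x ∂μ := by
    refine integral_mono ((integrable_const c).indicator hD)
      (integrable_finsetSum _ fun f _ => (integrable_const _).indicator (hm f)) ?_
    intro x
    have hs : ∑ f ∈ F, ((fun x : X => f • x) ⁻¹' E).indicator (fun _ => (1 : ℝ)) x =
        ((F.filter fun f => f • x ∈ E).card : ℝ) := by
      rw [Finset.card_filter]
      push_cast
      refine Finset.sum_congr rfl fun f _ => ?_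
      simp [Set.indicator_apply]
    simp only [hs]
    by_cases hx : x ∈ D
    · simpa [hx] using h x hx
    · simp [hx]
  rw [integral_indicator_const _ hD,
    integral_finsetSum _ (fun f _ => (integrable_const _).indicator (hm f))] at h1
  rw [Finset.sum_congr rfl (fun f _ => integral_indicator_const (1 : ℝ) (hm f))] at h1
  rw [Finset.sum_congr rfl (fun f _ => by rw [real_preimage hμ f hE])] at h1
  simp only [smul_eq_mul, mul_one, Finset.sum_const, nsmul_eq_mul] at h1
  linarith

open Classical in
theorem quasi_improve [CompactSpace X] (hfree : FreeAction G X) {μ : Measure X}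
    [IsProbabilityMeasure μ] (hμ : ∀ g : G, μ.map (fun x => g • x) = μ)
    {ε δ₀ γ : ℝ} (hε0 : 0 < ε) (hε : ε ≤ 1 / 2) (hδ : 0 < δ₀) (hγ : 0 < γ) {P : Finset G → Prop}
    (F : Finset G) (hFne : F.Nonempty) (hF : P F) {C : Set X}
    (hPF : HasQuasi ε δ₀ (fun T => P T ∧ FolnerInv G F⁻¹ (γ / (2 * F.card)) T) C) :
    ∃ C', HasQuasi ε δ₀ P C' ∧ 1 - μ.real C' ≤ (1 - ε) * (1 - μ.real C) + ε * γ := by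
  have hFc : (0 : ℝ) < F.card := by exact_mod_cast hFne.card_pos
  have hC : MeasurableSet C := hPF.measC
  obtain ⟨N, S, F₀, V, h⟩ := hPF
  have hq : Quasi ε δ₀ P S F₀ V C := ⟨h.meas, h.inj, h.sub, h.card, fun i => (h.prop i).1,
    h.small, h.cov, h.full⟩
  obtain ⟨C', hCC', hC'q, hcount⟩ := HasQuasi.stage (X := X) hfree (by linarith : ε ≤ 1) hδ F hF
    ⟨N, S, F₀, V, hq⟩
  refine ⟨C', hC'q, ?_⟩
  have hC' := hC'q.measC
  -- the set of points whose F-orbit avoids C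
  let D : Set X := ⋂ f ∈ F, (fun x : X => f • x) ⁻¹' Cᶜ
  have hD : MeasurableSet D := Finset.measurableSet_biInter _ fun f _ =>
    (continuous_const_smul f).measurable hC.compl
  have h1 : ε * F.card * μ.real D ≤ F.card * μ.real (C' \ C) := by
    refine double_count hμ F hD (hC'.diff hC) _ ?_
    intro x hx
    have : (F.filter fun f => f • x ∈ C' \ C) = F.filter fun f => f • x ∈ C' := by
      refine Finset.filter_congr fun f hf => ?_
      have := mem_iInter₂.1 hx f hf
      exact ⟨fun h => h.1, fun h => ⟨h, this⟩⟩
    have h0 := hcount x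
    rw [← this] at h0
    convert h0
  have h1' : ε * μ.real D ≤ μ.real (C' \ C) := by
    have : F.card * (ε * μ.real D) ≤ F.card * μ.real (C' \ C) := by linarith
    exact le_of_mul_le_mul_left this hFc
  have h2 : μ.real (C' \ C) = μ.real C' - μ.real C := measureReal_sdiff hCC' hC
  -- the boundary
  have h3 : Cᶜ ⊆ D ∪ ⋃ i ∈ (Finset.univ : Finset (Fin N)), ⋃ g ∈ (F⁻¹ * F₀ i) \ F₀ i, g • V i := by
    intro x hx
    by_cases hxD : x ∈ D
    · exact Or.inl hxD
    · right
      simp only [D, mem_iInter, not_forall, mem_preimage, mem_compl_iff, not_not] at hxD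
      obtain ⟨f, hf, hfx⟩ := hxD
      rw [h.cov] at hfx
      simp only [mem_iUnion] at hfx
      obtain ⟨i, s, hs, v, hv, hsv⟩ := hfx
      have hsv : s • v = f • x := hsv
      have hx' : x = (f⁻¹ * s) • v := by
        rw [mul_smul, hsv, inv_smul_smul]
      simp only [mem_iUnion]
      refine ⟨i, Finset.mem_univ _, f⁻¹ * s, Finset.mem_sdiff.2 ⟨?_, ?_⟩, ?_⟩
      · exact Finset.mul_mem_mul (Finset.inv_mem_inv hf) (h.sub i hs)
      · intro hmem
        exact hx (hx' ▸ h.full i _ hmem v hv)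
      · rw [hx']
        exact smul_mem_smul_set hv
  have h4 : μ.real (⋃ i ∈ (Finset.univ : Finset (Fin N)), ⋃ g ∈ (F⁻¹ * F₀ i) \ F₀ i, g • V i)
      ≤ γ := by
    calc μ.real (⋃ i ∈ (Finset.univ : Finset (Fin N)), ⋃ g ∈ (F⁻¹ * F₀ i) \ F₀ i, g • V i)
        ≤ ∑ i, μ.real (⋃ g ∈ (F⁻¹ * F₀ i) \ F₀ i, g • V i) := measureReal_biUnion_finset_le _ _
      _ ≤ ∑ i, γ * ((S i).card * μ.real (V i)) := by
        refine Finset.sum_le_sum fun i _ => ?_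
        calc μ.real (⋃ g ∈ (F⁻¹ * F₀ i) \ F₀ i, g • V i)
            ≤ ∑ g ∈ (F⁻¹ * F₀ i) \ F₀ i, μ.real (g • V i) := measureReal_biUnion_finset_le _ _
          _ = ((F⁻¹ * F₀ i) \ F₀ i).card * μ.real (V i) := by
            rw [Finset.sum_congr rfl fun s _ => real_smul hμ s (h.meas i)]
            simp
          _ ≤ (F.card * (γ / (2 * F.card) * (F₀ i).card)) * μ.real (V i) := by
            gcongr
            exact (h.prop i).2.boundary
          _ = γ * (((F₀ i).card / 2) * μ.real (V i)) := by field_simp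
          _ ≤ γ * ((S i).card * μ.real (V i)) := by
            gcongr
            have := h.card i
            have h0 : (0 : ℝ) ≤ (F₀ i).card := by positivity
            nlinarith
      _ = γ * μ.real C := by
        rw [← Finset.mul_sum, ← castle_measure hμ h.meas h.inj, ← h.cov]
      _ ≤ γ := by
        have : μ.real C ≤ 1 := measureReal_le_one
        nlinarith
  have h5 : μ.real Cᶜ ≤ μ.real D + γ :=
    (measureReal_mono h3).trans ((measureReal_union_le _ _).trans (by gcongr))
  have h6 : μ.real Cᶜ = 1 - μ.real C := by
    rw [measureReal_compl hC, probReal_univ]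
  nlinarith

theorem quasi_iterate [CompactSpace X] (hG : AmenableGroup G) (hfree : FreeAction G X)
    {μ : Measure X} [IsProbabilityMeasure μ] (hμ : ∀ g : G, μ.map (fun x => g • x) = μ)
    {ε δ₀ γ : ℝ} (hε0 : 0 < ε) (hε : ε ≤ 1 / 2) (hδ : 0 < δ₀) (hγ : 0 < γ) (k : ℕ) :
    ∀ (K : Finset G) (δ : ℝ), 0 < δ →
      ∃ C, HasQuasi (X := X) ε δ₀ (FolnerInv G K δ) C ∧ 1 - μ.real C ≤ (1 - ε) ^ k + γ := by
  classical
  induction k with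
  | zero =>
    intro K δ _
    refine ⟨∅, ⟨0, Fin.elim0, Fin.elim0, Fin.elim0, ?_⟩, ?_⟩
    · refine ⟨fun i => i.elim0, fun i => i.elim0, fun i => i.elim0, fun i => i.elim0,
        fun i => i.elim0, fun i => i.elim0, ?_, fun i => i.elim0⟩
      simp
    · simp; linarith
  | succ k ih =>
    intro K δ hδ'
    obtain ⟨F, hFne, hF⟩ := hG K δ hδ'
    have hFc : (0 : ℝ) < F.card := by exact_mod_cast hFne.card_pos
    obtain ⟨C, hC, hCr⟩ := ih (K ∪ F⁻¹) (min δ (γ / (2 * F.card))) (by positivity)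
    have hC2 : HasQuasi ε δ₀ (fun T => FolnerInv G K δ T ∧ FolnerInv G F⁻¹ (γ / (2 * F.card)) T)
        C := by
      obtain ⟨N, S, F₀, V, h⟩ := hC
      exact ⟨N, S, F₀, V, h.meas, h.inj, h.sub, h.card,
        fun i => ⟨(h.prop i).mono Finset.subset_union_left (min_le_left _ _),
          (h.prop i).mono Finset.subset_union_right (min_le_right _ _)⟩, h.small, h.cov, h.full⟩
    obtain ⟨C', h1, h2⟩ := quasi_improve hfree hμ hε0 hε hδ hγ F hFne hF hC2
    refine ⟨C', h1, h2.trans ?_⟩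
    rw [pow_succ]
    have h0 : 0 ≤ 1 - ε := by linarith
    have := mul_le_mul_of_nonneg_left hCr h0
    linarith

/-- Ornstein--Weiss Rokhlin lemma: Borel castles with Følner shapes covering most of the space. -/
theorem ornstein_weiss [CompactSpace X] (hG : AmenableGroup G) (hfree : FreeAction G X)
    {μ : Measure X} [IsProbabilityMeasure μ] (hμ : ∀ g : G, μ.map (fun x => g • x) = μ)
    (K : Finset G) {δ δ₀ γ : ℝ} (hδ : 0 < δ) (hδ1 : δ ≤ 1) (hδ₀ : 0 < δ₀) (hγ : 0 < γ) :
    ∃ (N : ℕ) (S : Fin N → Finset G) (V : Fin N → Set X),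
      (∀ i, MeasurableSet (V i)) ∧ CastleInj S V ∧ (∀ i, FolnerInv G K δ (S i)) ∧
      (∀ i, ∀ s ∈ S i, ∀ x ∈ V i, ∀ y ∈ V i, dist (s • x) (s • y) ≤ δ₀) ∧
      1 - γ < μ.real (⋃ i, ⋃ s ∈ S i, s • V i) := by
  have hK : (0 : ℝ) < 1 + K.card := by positivity
  set ε : ℝ := min (1 / 2) (δ / 2 / (1 + K.card)) with hεdef
  have hε0 : 0 < ε := by positivity
  have hε : ε ≤ 1 / 2 := min_le_left _ _
  have hε2 : (1 + K.card) * ε ≤ δ / 2 := by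
    have : ε ≤ δ / 2 / (1 + K.card) := min_le_right _ _
    calc (1 + K.card) * ε ≤ (1 + K.card) * (δ / 2 / (1 + K.card)) := by gcongr
      _ = δ / 2 := by field_simp
  obtain ⟨k, hk⟩ := exists_pow_lt_of_lt_one (by positivity : (0 : ℝ) < γ / 2)
    (by linarith : 1 - ε < 1)
  obtain ⟨C, ⟨N, S, F, V, h⟩, hCr⟩ := quasi_iterate (X := X) hG hfree hμ hε0 hε hδ₀
    (by positivity : (0 : ℝ) < γ / 2) k K (δ / 2) (by positivity)
  refine ⟨N, S, V, h.meas, h.inj, ?_, ?_, ?_⟩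
  · intro i
    exact (h.prop i).of_subset hδ1 (h.sub i) (h.card i) hε2
  · intro i s hs
    exact h.small i s (h.sub i hs)
  · rw [← h.cov]
    linarith

end OW2

section OpenCastle
open Filter Topology
set_option linter.unusedSectionVars false
variable {G : Type*} {X : Type*} [Group G] [MetricSpace X] [MulAction G X]
variable [MeasurableSpace X] [BorelSpace X] [ContinuousConstSMul G X] [CompactSpace X]

theorem eventually_cthickening_subset {A U : Set X} (hA : IsCompact A) (hU : IsOpen U)
    (h : A ⊆ U) : ∀ᶠ r in 𝓝[>] (0 : ℝ), Metric.cthickening r A ⊆ U := by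
  obtain ⟨δ, hδ, hs⟩ := hA.exists_cthickening_subset_open hU h
  filter_upwards [Ioo_mem_nhdsGT hδ] with r hr
  exact (Metric.cthickening_mono hr.2.le A).trans hs

theorem thicken_castle {N : ℕ} {S : Fin N → Finset G} {V : Fin N → Set X}
    (hV : ∀ i, IsCompact (V i)) (hinj : CastleInj S V) {δ : ℝ} (hδ : 0 < δ)
    (hsmall : ∀ i, ∀ s ∈ S i, ∀ x ∈ V i, ∀ y ∈ V i, dist (s • x) (s • y) ≤ δ / 2) :
    ∃ U : Fin N → Set X, (∀ i, IsOpen (U i)) ∧ (∀ i, V i ⊆ U i) ∧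
      CastleInj S (fun i => closure (U i)) ∧
      ∀ i, ∀ s ∈ S i, Metric.diam (s • closure (U i)) < δ := by
  have h1 : ∀ᶠ r in 𝓝[>] (0 : ℝ), ∀ i j, ∀ s ∈ S i, ∀ t ∈ S j,
      ∀ x ∈ Metric.cthickening r (V i), ∀ y ∈ Metric.cthickening r (V j),
        s • x = t • y → i = j ∧ s = t := by
    refine eventually_all.2 fun i => eventually_all.2 fun j => ?_
    refine (Filter.eventually_all_finset (S i)).2 fun s hs =>
      (Filter.eventually_all_finset (S j)).2 fun t ht => ?_
    by_cases hst : i = j ∧ s = t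
    · exact Eventually.of_forall fun _ _ _ _ _ _ => hst
    · have hd : Disjoint (s • V i) (t • V j) := by
        refine Set.disjoint_left.2 ?_
        rintro _ ⟨x, hx, rfl⟩ ⟨y, hy, hxy⟩
        exact hst (hinj i j s hs t ht x hx y hy hxy.symm)
      obtain ⟨A, B, hA, hB, hVA, hVB, hAB⟩ :=
        SeparatedNhds.of_isCompact_isCompact ((hV i).smul s) ((hV j).smul t) hd
      filter_upwards [eventually_cthickening_subset (hV i)
          (hA.preimage (continuous_const_smul s))
          (fun x hx => hVA (smul_mem_smul_set hx)),
        eventually_cthickening_subset (hV j)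
          (hB.preimage (continuous_const_smul t))
          (fun x hx => hVB (smul_mem_smul_set hx))] with r h1 h2 x hx y hy hxy
      exact absurd hxy (hAB.ne_of_mem (h1 hx) (h2 hy))
  have h2 : ∀ᶠ r in 𝓝[>] (0 : ℝ), ∀ i, ∀ s ∈ S i,
      Metric.cthickening r (V i) ⊆ (fun x => s • x) ⁻¹' (Metric.thickening (δ / 8) (s • V i)) := by
    refine eventually_all.2 fun i => (Filter.eventually_all_finset (S i)).2 fun s hs => ?_
    refine eventually_cthickening_subset (hV i)
      (Metric.isOpen_thickening.preimage (continuous_const_smul s)) ?_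
    intro x hx
    exact Metric.self_subset_thickening (by positivity) _ (smul_mem_smul_set hx)
  obtain ⟨r, ⟨h1, h2⟩, hr⟩ := ((h1.and h2).and self_mem_nhdsWithin).exists
  have hr : 0 < r := hr
  have hcl : ∀ i, closure (Metric.thickening r (V i)) ⊆ Metric.cthickening r (V i) := fun i =>
    Metric.closure_thickening_subset_cthickening _ _
  refine ⟨fun i => Metric.thickening r (V i), fun i => Metric.isOpen_thickening,
    fun i => Metric.self_subset_thickening hr _, ?_, ?_⟩
  · intro i j s hs t ht x hx y hy hxy
    exact h1 i j s hs t ht x (hcl i hx) y (hcl j hy) hxy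
  · intro i s hs
    have : Metric.diam (s • closure (Metric.thickening r (V i))) ≤ 3 / 4 * δ := by
      refine Metric.diam_le_of_forall_dist_le (by positivity) ?_
      rintro _ ⟨x, hx, rfl⟩ _ ⟨y, hy, rfl⟩
      have hx' := h2 i s hs (hcl i hx)
      have hy' := h2 i s hs (hcl i hy)
      rw [mem_preimage, Metric.mem_thickening_iff] at hx' hy'
      obtain ⟨_, ⟨x', hx1, rfl⟩, hx2⟩ := hx'
      obtain ⟨_, ⟨y', hy1, rfl⟩, hy2⟩ := hy'
      have h3 := hsmall i s hs x' hx1 y' hy1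
      have h4 := dist_triangle4 (s • x) (s • x') (s • y') (s • y)
      simp only at hx2 hy2
      rw [dist_comm] at hy2
      change dist (s • x) (s • y) ≤ _
      linarith
    linarith

theorem open_castle (hG : AmenableGroup G) (hfree : FreeAction G X)
    {μ : Measure X} [IsProbabilityMeasure μ] (hμ : ∀ g : G, μ.map (fun x => g • x) = μ)
    (K : Finset G) {δ γ : ℝ} (hδ : 0 < δ) (hδ1 : δ ≤ 1) (hγ : 0 < γ) :
    ∃ (N : ℕ) (S : Fin N → Finset G) (V : Fin N → Set X),
      (∀ i, IsOpen (V i)) ∧ CastleInj S (fun i => closure (V i)) ∧ (∀ i, FolnerInv G K δ (S i)) ∧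
      (∀ i, ∀ s ∈ S i, Metric.diam (s • closure (V i)) < δ) ∧
      1 - γ < μ.real (⋃ i, ⋃ s ∈ S i, s • V i) := by
  obtain ⟨N, S, V, hV, hinj, hS, hsm, hm⟩ := ornstein_weiss (X := X) hG hfree hμ K hδ hδ1
    (by positivity : 0 < δ / 2) (by positivity : 0 < γ / 2)
  obtain ⟨M, hM⟩ : ∃ M : ℝ, M = ∑ i, ((S i).card : ℝ) := ⟨_, rfl⟩
  have hM0 : 0 ≤ M := hM ▸ Finset.sum_nonneg fun i _ => Nat.cast_nonneg _
  have hη : 0 < γ / 2 / (1 + M) := by positivity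
  have h1 : ∀ i, ∃ L ⊆ V i, IsCompact L ∧ μ.real (V i) ≤ μ.real L + γ / 2 / (1 + M) := by
    intro i
    obtain ⟨L, hL, hLc, hlt⟩ := (hV i).exists_isCompact_lt_add (μ := μ) (measure_ne_top _ _)
      (ε := ENNReal.ofReal (γ / 2 / (1 + M))) (by simpa using hη)
    refine ⟨L, hL, hLc, ?_⟩
    have := ENNReal.toReal_mono (by finiteness) hlt.le
    rwa [ENNReal.toReal_add (by finiteness) (by finiteness), ENNReal.toReal_ofReal hη.le] at this
  choose L hLV hLc hLm using h1
  have hinjL : CastleInj S L := fun i j s hs t ht x hx y hy h =>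
    hinj i j s hs t ht x (hLV i hx) y (hLV j hy) h
  obtain ⟨U, hUo, hLU, hUinj, hUd⟩ := thicken_castle hLc hinjL hδ
    (fun i s hs x hx y hy => hsm i s hs x (hLV i hx) y (hLV i hy))
  refine ⟨N, S, U, hUo, hUinj, hS, hUd, ?_⟩
  have h2 : μ.real (⋃ i, ⋃ s ∈ S i, s • L i) ≤ μ.real (⋃ i, ⋃ s ∈ S i, s • U i) := by
    refine measureReal_mono ?_
    refine iUnion_mono fun i => iUnion₂_mono fun s _ => ?_
    exact smul_set_mono (hLU i)
  rw [castle_measure hμ (fun i => (hLc i).measurableSet) hinjL] at h2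
  rw [castle_measure hμ hV hinj] at hm
  have h3 : ∑ i, ((S i).card : ℝ) * μ.real (V i) ≤
      ∑ i, ((S i).card : ℝ) * μ.real (L i) + M * (γ / 2 / (1 + M)) := by
    rw [hM, Finset.sum_mul, ← Finset.sum_add_distrib]
    refine Finset.sum_le_sum fun i _ => ?_
    rw [← mul_add]
    gcongr
    rw [← hM]
    exact hLm i
  have h4 : M * (γ / 2 / (1 + M)) ≤ γ / 2 := by
    rw [mul_div_assoc', div_le_iff₀ (by positivity)]
    nlinarith
  linarith

/-- Upper approximation of closed sets by continuous functions. -/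
theorem exists_upper {μ : Measure X} [IsProbabilityMeasure μ] {R : Set X} (hR : IsClosed R)
    {ε : ℝ} (h : μ.real R < ε) :
    ∃ f : C(X, ℝ), (∀ x, 0 ≤ f x) ∧ (∀ x ∈ R, 1 ≤ f x) ∧ ∫ x, f x ∂μ < ε := by
  have h' : μ R < ENNReal.ofReal ε := by
    rw [ENNReal.lt_ofReal_iff_toReal_lt (measure_ne_top _ _)]
    exact h
  obtain ⟨U, hRU, hU, hUm⟩ := Set.exists_isOpen_lt_of_lt R _ h'
  obtain ⟨f, hf0, hf1, hf⟩ := exists_continuous_zero_one_of_isClosed hU.isClosed_compl hR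
    (Set.disjoint_left.2 fun x hx hx' => hx (hRU hx'))
  refine ⟨f, fun x => (hf x).1, fun x hx => (hf1 hx).ge, ?_⟩
  have h1 : ∫ x, f x ∂μ ≤ ∫ x, U.indicator (fun _ => (1 : ℝ)) x ∂μ := by
    refine integral_mono (f.continuous.integrable_of_hasCompactSupport
      (HasCompactSupport.of_compactSpace _)) ((integrable_const _).indicator hU.measurableSet) ?_
    intro x
    by_cases hx : x ∈ U
    · simpa [hx] using (hf x).2
    · simpa [hx] using (hf0 hx).le
  rw [integral_indicator_const _ hU.measurableSet] at h1
  have h2 : μ.real U < ε := (ENNReal.lt_ofReal_iff_toReal_lt (measure_ne_top _ _)).1 hUm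
  simp at h1
  linarith

end OpenCastle

section Bauer
open Filter Topology
set_option linter.unusedSectionVars false
variable {G : Type*} {X : Type*} [Group G] [MetricSpace X] [MulAction G X]
variable [MeasurableSpace X] [BorelSpace X] [ContinuousConstSMul G X] [CompactSpace X]

theorem cm_integrable (f : C(X, ℝ)) (μ : Measure X) [IsFiniteMeasure μ] :
    Integrable (fun x => f x) μ :=
  (BoundedContinuousFunction.mkOfCompact f).integrable μ

theorem continuous_integral_cm (f : C(X, ℝ)) :
    Continuous fun μ : ProbabilityMeasure X => ∫ x, f x ∂(μ : Measure X) :=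
  ProbabilityMeasure.continuous_integral_boundedContinuousFunction
    (BoundedContinuousFunction.mkOfCompact f)

theorem pm_ext {μ ν : ProbabilityMeasure X}
    (h : ∀ f : C(X, ℝ), ∫ x, f x ∂(μ : Measure X) = ∫ x, f x ∂(ν : Measure X)) : μ = ν := by
  apply Subtype.ext
  have h2 : (μ : Measure X) = (ν : Measure X) := by
    apply ext_of_forall_integral_eq_of_IsFiniteMeasure
    intro f
    exact h f.toContinuousMap
  exact h2

/-- translate of a continuous function -/
noncomputable def gtr (g : G) (f : C(X, ℝ)) : C(X, ℝ) :=
  f.comp ⟨fun x => g • x, continuous_const_smul g⟩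

@[simp] theorem gtr_apply (g : G) (f : C(X, ℝ)) (x : X) : gtr g f x = f (g • x) := rfl

theorem integral_gtr {μ : Measure X} (hμ : ∀ g : G, μ.map (fun x => g • x) = μ) (g : G)
    (f : C(X, ℝ)) : ∫ x, gtr g f x ∂μ = ∫ x, f x ∂μ := by
  conv_rhs => rw [← hμ g]
  rw [integral_map (continuous_const_smul g).aemeasurable f.continuous.aestronglyMeasurable]
  rfl

theorem mem_MG_iff {μ : ProbabilityMeasure X} : μ ∈ MG G X ↔
    ∀ (g : G) (f : C(X, ℝ)), ∫ x, gtr g f x ∂(μ : Measure X) = ∫ x, f x ∂(μ : Measure X) := by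
  constructor
  · intro h g f
    exact integral_gtr h g f
  · intro h g
    have : IsProbabilityMeasure (Measure.map (fun x => g • x) (μ : Measure X)) :=
      Measure.isProbabilityMeasure_map (continuous_const_smul g).aemeasurable
    apply ext_of_forall_integral_eq_of_IsFiniteMeasure
    intro f
    rw [integral_map (continuous_const_smul g).aemeasurable
      f.continuous.aestronglyMeasurable]
    exact h g f.toContinuousMap

theorem isClosed_MG : IsClosed (MG G X) := by
  have : MG G X = ⋂ (g : G) (f : C(X, ℝ)), {μ : ProbabilityMeasure X |
      ∫ x, gtr g f x ∂(μ : Measure X) = ∫ x, f x ∂(μ : Measure X)} := by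
    ext μ
    rw [mem_MG_iff]
    simp
  rw [this]
  refine isClosed_iInter fun g => isClosed_iInter fun f => ?_
  exact isClosed_eq (continuous_integral_cm _) (continuous_integral_cm _)

theorem cond_invariant {μ : Measure X} [IsProbabilityMeasure μ]
    (hμ : ∀ g : G, μ.map (fun x => g • x) = μ)
    {B : Set X} (hB : MeasurableSet B) (hinv : ∀ g : G, g • B = B) (g : G) :
    (ProbabilityTheory.cond μ B).map (fun x => g • x) = ProbabilityTheory.cond μ B := by
  unfold ProbabilityTheory.cond
  rw [Measure.map_smul]
  congr 1
  have h := Measure.restrict_map (μ := μ) (continuous_const_smul (T := X) g).measurable hB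
  rw [hμ g] at h
  have hp : (fun x : X => g • x) ⁻¹' B = B := by
    conv_rhs => rw [← hinv g⁻¹]
    rw [← Set.preimage_smul]
  rw [hp] at h
  exact h.symm

theorem integral_cond_eq {μ : Measure X} (B : Set X) (f : X → ℝ) :
    ∫ x, f x ∂(ProbabilityTheory.cond μ B) = (μ.real B)⁻¹ * ∫ x in B, f x ∂μ := by
  unfold ProbabilityTheory.cond
  rw [integral_smul_measure]
  simp [Measure.real]

theorem extreme_ergodic {μ : ProbabilityMeasure X} (hμ : μ ∈ MG G X)
    (hext : (fun f : C(X, ℝ) => ∫ x, f x ∂(μ : Measure X)) ∈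
      ((fun (μ : ProbabilityMeasure X) (f : C(X, ℝ)) => ∫ x, f x ∂(μ : Measure X)) ''
        MG G X).extremePoints ℝ) : μ ∈ EG G X := by
  refine ⟨hμ, fun B hB hinv => ?_⟩
  by_contra! hne
  have hcinv : ∀ g : G, g • Bᶜ = Bᶜ := fun g => by rw [Set.smul_set_compl, hinv g]
  have h0 : (μ : Measure X) B ≠ 0 := by
    intro h; apply hne.1; simp [ProbabilityMeasure.coeFn_def, h]
  have h1 : (μ : Measure X) Bᶜ ≠ 0 := by
    intro h
    apply hne.2
    have := (prob_compl_eq_zero_iff hB).1 h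
    simp [ProbabilityMeasure.coeFn_def, this]
  have := ProbabilityTheory.cond_isProbabilityMeasure h0
  have := ProbabilityTheory.cond_isProbabilityMeasure h1
  have hr0 : 0 < (μ : Measure X).real B :=
    ENNReal.toReal_pos h0 (measure_ne_top _ _)
  have hr1 : 0 < (μ : Measure X).real Bᶜ :=
    ENNReal.toReal_pos h1 (measure_ne_top _ _)
  let ν1 : ProbabilityMeasure X := ⟨ProbabilityTheory.cond (μ : Measure X) B, inferInstance⟩
  let ν2 : ProbabilityMeasure X := ⟨ProbabilityTheory.cond (μ : Measure X) Bᶜ, inferInstance⟩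
  have hν1 : ν1 ∈ MG G X := fun g => cond_invariant hμ hB hinv g
  have hν2 : ν2 ∈ MG G X := fun g => cond_invariant hμ hB.compl hcinv g
  have := (mem_extremePoints_iff_left.1 hext).2 _ ⟨ν1, hν1, rfl⟩ _ ⟨ν2, hν2, rfl⟩ ?_
  · have h2 : ν1 = μ := pm_ext fun f => congrFun this f
    have h3 : (ν1 : Measure X) B = (μ : Measure X) B := by rw [h2]
    have h4 : (ν1 : Measure X) B = 1 :=
      ProbabilityTheory.cond_apply_self h0 (measure_ne_top _ _)
    apply hne.2
    rw [h4] at h3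
    simp [ProbabilityMeasure.coeFn_def, ← h3]
  · refine ⟨(μ : Measure X).real B, (μ : Measure X).real Bᶜ, hr0, hr1, ?_, ?_⟩
    · exact probReal_add_probReal_compl hB
    · funext f
      simp only [Pi.add_apply, Pi.smul_apply, smul_eq_mul, ν1, ν2, ProbabilityMeasure.coe_mk]
      rw [integral_cond_eq, integral_cond_eq, mul_inv_cancel_left₀ hr0.ne',
        mul_inv_cancel_left₀ hr1.ne']
      exact integral_add_compl hB (cm_integrable f _)

theorem bauer_max (f : C(X, ℝ)) (ε : ℝ) (h : ∀ μ ∈ EG G X, ∫ x, f x ∂(μ : Measure X) < ε) :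
    ∀ μ ∈ MG G X, ∫ x, f x ∂(μ : Measure X) < ε := by
  intro μ hμ
  let Φ : ProbabilityMeasure X → (C(X, ℝ) → ℝ) := fun μ f => ∫ x, f x ∂(μ : Measure X)
  have hΦ : Continuous Φ := continuous_pi fun f => continuous_integral_cm f
  have hc : IsCompact (Φ '' MG G X) := (isClosed_MG.isCompact).image hΦ
  let l : StrongDual ℝ (C(X, ℝ) → ℝ) := ContinuousLinearMap.proj f
  have he : IsExposed ℝ (Φ '' MG G X) (l.toExposed (Φ '' MG G X)) :=
    ContinuousLinearMap.toExposed.isExposed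
  have hcB := he.isCompact hc
  obtain ⟨z, hz, hzmax⟩ := hc.exists_isMaxOn ⟨_, mem_image_of_mem _ hμ⟩ l.continuous.continuousOn
  obtain ⟨p, hp⟩ := hcB.extremePoints_nonempty ⟨z, hz, fun y hy => hzmax hy⟩
  have hp2 := he.isExtreme.extremePoints_subset_extremePoints hp
  obtain ⟨⟨ν, hν, rfl⟩, hmax⟩ := extremePoints_subset hp
  have := h ν (extreme_ergodic hν hp2)
  exact lt_of_le_of_lt (hmax _ (mem_image_of_mem _ hμ)) this

end Bauer

section MeanErgodic
open Filter Topology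
set_option linter.unusedSectionVars false
variable {G : Type*} {X : Type*} [Group G] [MetricSpace X] [MulAction G X]
variable [MeasurableSpace X] [BorelSpace X] [ContinuousConstSMul G X] [CompactSpace X]

/-- translation as a linear map -/
noncomputable def gtrL (g : G) : C(X, ℝ) →ₗ[ℝ] C(X, ℝ) where
  toFun := gtr g
  map_add' _ _ := rfl
  map_smul' _ _ := rfl

theorem gtr_gtr (g h : G) (f : C(X, ℝ)) : gtr g (gtr h f) = gtr (h * g) f := by
  ext x; simp [mul_smul]

/-- convex hull of the orbit -/
def orbHull (G : Type*) {X : Type*} [Group G] [MetricSpace X] [MulAction G X]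
    [ContinuousConstSMul G X] [CompactSpace X]
    [MeasurableSpace X] [BorelSpace X] (f : C(X, ℝ)) : Set C(X, ℝ) :=
  convexHull ℝ (range fun g : G => gtr g f)

theorem orbHull_gtr {f u : C(X, ℝ)} (g : G) (hu : u ∈ orbHull G f) : gtr g u ∈ orbHull G f := by
  have h : gtrL g u ∈ gtrL g '' orbHull G f := mem_image_of_mem _ hu
  unfold orbHull at h
  rw [LinearMap.image_convexHull] at h
  refine convexHull_mono ?_ h
  rintro _ ⟨_, ⟨k, rfl⟩, rfl⟩
  exact ⟨k * g, (gtr_gtr g k f).symm⟩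

theorem orbHull_integral {μ : Measure X} [IsProbabilityMeasure μ]
    (hμ : ∀ g : G, μ.map (fun x => g • x) = μ) {f u : C(X, ℝ)} (hu : u ∈ orbHull G f) :
    ∫ x, u x ∂μ = ∫ x, f x ∂μ := by
  have hconv : Convex ℝ {u : C(X, ℝ) | ∫ x, u x ∂μ = ∫ x, f x ∂μ} := by
    intro u hu v hv a b _ _ hab
    simp only [mem_ofPred_eq] at hu hv ⊢
    have : ∫ x, (a • u + b • v) x ∂μ = a * ∫ x, u x ∂μ + b * ∫ x, v x ∂μ := by
      simp only [ContinuousMap.add_apply, ContinuousMap.smul_apply, smul_eq_mul]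
      rw [integral_add ((cm_integrable u μ).const_mul a) ((cm_integrable v μ).const_mul b),
        integral_const_mul, integral_const_mul]
    rw [this, hu, hv, ← add_mul, hab, one_mul]
  exact convexHull_min (by rintro _ ⟨g, rfl⟩; exact integral_gtr hμ g f) hconv hu

/-- a.e.-invariant functions are a.e. constant -/
theorem ae_const_of_inv [Countable G] {μ : Measure X} [IsProbabilityMeasure μ]
    (hμ : ∀ g : G, μ.map (fun x => g • x) = μ)
    (herg : ∀ A : Set X, MeasurableSet A → (∀ g : G, g • A = A) → μ A = 0 ∨ μ A = 1)
    {v : X → ℝ} (hv : Measurable v) (hinv : ∀ g : G, ∀ᵐ x ∂μ, v (g • x) = v x) :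
    ∃ c, v =ᵐ[μ] fun _ => c := by
  have := Filter.exists_eventuallyEq_const_of_forall_separating (l := ae μ) (f := v) MeasurableSet
    ?_
  · exact this
  intro U hU
  let A : Set X := ⋂ g : G, (fun x => g • x) ⁻¹' (v ⁻¹' U)
  have hA : MeasurableSet A :=
    MeasurableSet.iInter fun g => (continuous_const_smul g).measurable (hv hU)
  have hmem : ∀ x, x ∈ A ↔ ∀ g : G, v (g • x) ∈ U := fun x => by simp [A]
  have hAinv : ∀ g : G, g • A = A := by
    intro g
    ext x
    rw [Set.mem_smul_set_iff_inv_smul_mem, hmem, hmem]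
    constructor
    · intro h k
      have := h (k * g)
      rwa [smul_smul, mul_assoc, mul_inv_cancel, mul_one] at this
    · intro h k
      have := h (k * g⁻¹)
      rwa [smul_smul]
  have hae : ∀ᵐ x ∂μ, x ∈ A ↔ v x ∈ U := by
    filter_upwards [ae_all_iff.2 hinv] with x hx
    rw [hmem]
    constructor
    · intro h; simpa using h 1
    · intro h g; rw [hx]; exact h
  rcases herg A hA hAinv with h | h
  · right
    filter_upwards [hae, measure_eq_zero_iff_ae_notMem.1 h] with x h1 h2
    exact fun h3 => h2 (h1.2 h3)
  · left
    filter_upwards [hae, (prob_compl_eq_zero_iff hA).2 h] with x h1 h2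
    exact h1.1 h2

theorem L2_norm_sq {μ : Measure X} (F : Lp ℝ 2 μ) : ‖F‖ ^ 2 = ∫ x, (F x) ^ 2 ∂μ := by
  rw [← real_inner_self_eq_norm_sq, L2.inner_def]
  refine integral_congr_ae (Eventually.of_forall fun x => ?_)
  simp [sq]

theorem integral_sq_sub {μ : Measure X} [IsProbabilityMeasure μ] (u : C(X, ℝ)) (d : ℝ) :
    ∫ x, (u x - d) ^ 2 ∂μ = ∫ x, (u ^ 2 : C(X, ℝ)) x ∂μ - 2 * d * ∫ x, u x ∂μ + d ^ 2 := by
  have : ∀ x, (u x - d) ^ 2 = (u ^ 2 : C(X, ℝ)) x - 2 * d * u x + d ^ 2 := by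
    intro x; simp; ring
  simp only [this]
  have h1 : Integrable (fun x => (u ^ 2 : C(X, ℝ)) x - 2 * d * u x) μ :=
    (cm_integrable _ μ).sub ((cm_integrable u μ).const_mul _)
  rw [integral_add h1 (integrable_const _), integral_sub (cm_integrable _ μ)
    ((cm_integrable u μ).const_mul _), integral_const_mul]
  simp

theorem mean_ergodic [Countable G] {μ : Measure X} [IsProbabilityMeasure μ]
    (hμ : ∀ g : G, μ.map (fun x => g • x) = μ)
    (herg : ∀ A : Set X, MeasurableSet A → (∀ g : G, g • A = A) → μ A = 0 ∨ μ A = 1)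
    (f : C(X, ℝ)) {ε : ℝ} (hε : 0 < ε) :
    ∃ u ∈ orbHull G f, ∫ x, (u x - ∫ y, f y ∂μ) ^ 2 ∂μ < ε := by
  let T : C(X, ℝ) →L[ℝ] Lp ℝ 2 μ := ContinuousMap.toLp 2 μ ℝ
  let C : Set (Lp ℝ 2 μ) := closure (T '' orbHull G f)
  have hconv : Convex ℝ C := ((convex_convexHull ℝ _).linear_image T.toLinearMap).closure
  have hne : C.Nonempty :=
    ⟨T (gtr (1 : G) f), subset_closure (mem_image_of_mem _ (subset_convexHull ℝ _ ⟨1, rfl⟩))⟩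
  obtain ⟨v, hvC, hv⟩ := exists_norm_eq_iInf_of_complete_convex hne
    isClosed_closure.isComplete hconv (0 : Lp ℝ 2 μ)
  rw [norm_eq_iInf_iff_real_inner_le_zero hconv hvC] at hv
  have hmp : ∀ g : G, MeasurePreserving (fun x : X => g • x) μ μ := fun g =>
    ⟨(continuous_const_smul g).measurable, hμ g⟩
  let U : G → Lp ℝ 2 μ → Lp ℝ 2 μ := fun g => Lp.compMeasurePreserving (fun x => g • x) (hmp g)
  have hUT : ∀ g u, U g (T u) = T (gtr g u) := by
    intro g u
    rfl
  have hUC : ∀ g, U g v ∈ C := by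
    intro g
    have hcont : Continuous (U g) := (Lp.isometry_compMeasurePreserving (hmp g)).continuous
    have h1 : MapsTo (U g) (T '' orbHull G f) (T '' orbHull G f) := by
      rintro _ ⟨u, hu, rfl⟩
      exact ⟨gtr g u, orbHull_gtr g hu, (hUT g u).symm⟩
    exact h1.closure hcont hvC
  have hUv : ∀ g, U g v = v := by
    intro g
    have h1 := hv _ (hUC g)
    rw [zero_sub, inner_neg_left, inner_sub_right, real_inner_self_eq_norm_sq] at h1
    have h2 : ‖U g v‖ = ‖v‖ := Lp.norm_compMeasurePreserving v (hmp g)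
    have h3 := norm_sub_sq_real (U g v) v
    rw [h2, real_inner_comm] at h3
    have h4 : ‖U g v - v‖ ^ 2 ≤ 0 := by linarith
    have h5 : ‖U g v - v‖ = 0 := by
      have := sq_nonneg ‖U g v - v‖
      exact pow_eq_zero_iff (two_ne_zero) |>.1 (le_antisymm h4 this)
    exact sub_eq_zero.1 (norm_eq_zero.1 h5)
  obtain ⟨c, hc⟩ := ae_const_of_inv hμ herg (v := v) (Lp.stronglyMeasurable v).measurable (by
    intro g
    have h1 := Lp.coeFn_compMeasurePreserving v (hmp g)
    have h2 : U g v = Lp.compMeasurePreserving (fun x => g • x) (hmp g) v := rfl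
    rw [← h2, hUv g] at h1
    filter_upwards [h1] with x hx
    exact hx.symm)
  obtain ⟨_, ⟨u, hu, rfl⟩, hd⟩ := Metric.mem_closure_iff.1 hvC (Real.sqrt ε) (Real.sqrt_pos.2 hε)
  refine ⟨u, hu, ?_⟩
  have h1 : ‖T u - v‖ ^ 2 < ε := by
    rw [dist_comm, dist_eq_norm] at hd
    calc ‖T u - v‖ ^ 2 < (Real.sqrt ε) ^ 2 := by gcongr
      _ = ε := Real.sq_sqrt hε.le
  rw [L2_norm_sq] at h1
  have h2 : ∫ x, ((T u - v : Lp ℝ 2 μ) x) ^ 2 ∂μ = ∫ x, (u x - c) ^ 2 ∂μ := by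
    refine integral_congr_ae ?_
    filter_upwards [Lp.coeFn_sub (T u) v, hc, ContinuousMap.coeFn_toLp (p := 2) (𝕜 := ℝ) μ u]
      with x h1 h2 h3
    rw [h1, Pi.sub_apply, h2]
    congr 2
  rw [h2] at h1
  have hIntg := orbHull_integral hμ hu
  have hexp : ∀ d : ℝ, ∫ x, (u x - d) ^ 2 ∂μ =
      ∫ x, (u ^ 2 : C(X, ℝ)) x ∂μ - 2 * d * ∫ x, f x ∂μ + d ^ 2 := by
    intro d
    rw [integral_sq_sub, hIntg]
  rw [hexp] at h1 ⊢
  nlinarith [sq_nonneg (c - ∫ x, f x ∂μ)]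

end MeanErgodic

section Uniform
open Filter Topology
set_option linter.unusedSectionVars false
variable {G : Type*} {X : Type*} [Group G] [MetricSpace X] [MulAction G X]
variable [MeasurableSpace X] [BorelSpace X] [ContinuousConstSMul G X] [CompactSpace X]

/-- the filter of eventually invariant finite sets -/
def folF (G : Type*) [Group G] : Filter (Finset G) where
  sets := {A | ∃ (K : Finset G) (δ : ℝ), 0 < δ ∧
    ∀ F : Finset G, F.Nonempty → FolnerInv G K δ F → F ∈ A}
  univ_sets := ⟨∅, 1, one_pos, fun _ _ _ => mem_univ _⟩
  sets_of_superset := by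
    rintro A B ⟨K, δ, hδ, h⟩ hAB
    exact ⟨K, δ, hδ, fun F h1 h2 => hAB (h F h1 h2)⟩
  inter_sets := by
    classical
    rintro A B ⟨K, δ, hδ, h⟩ ⟨K', δ', hδ', h'⟩
    exact ⟨K ∪ K', min δ δ', lt_min hδ hδ', fun F h1 h2 =>
      ⟨h F h1 (h2.mono Finset.subset_union_left (min_le_left _ _)),
        h' F h1 (h2.mono Finset.subset_union_right (min_le_right _ _))⟩⟩

theorem folF_neBot (hG : AmenableGroup G) : (folF G).NeBot := by
  refine ⟨fun h => ?_⟩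
  have h1 : (∅ : Set (Finset G)) ∈ folF G := by rw [h]; trivial
  obtain ⟨K, δ, hδ, h2⟩ := h1
  obtain ⟨S, hS, hS'⟩ := hG K δ hδ
  exact h2 S hS hS'

theorem folF_nonempty : ∀ᶠ F in folF G, F.Nonempty := ⟨∅, 1, one_pos, fun _ h _ => h⟩

/-- ergodic averages -/
noncomputable def avg (F : Finset G) (u : C(X, ℝ)) : C(X, ℝ) :=
  (F.card : ℝ)⁻¹ • ∑ s ∈ F, gtr s u

theorem avg_apply (F : Finset G) (u : C(X, ℝ)) (x : X) :
    avg F u x = (F.card : ℝ)⁻¹ * ∑ s ∈ F, u (s • x) := by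
  simp [avg]

theorem norm_gtr_le (g : G) (f : C(X, ℝ)) : ‖gtr g f‖ ≤ ‖f‖ :=
  (ContinuousMap.norm_le _ (norm_nonneg _)).2 fun x => f.norm_coe_le_norm (g • x)

theorem avg_gtr_close (g : G) (f : C(X, ℝ)) {η : ℝ} (hη : 0 < η) :
    ∀ᶠ F in folF G, ‖avg F (gtr g f) - avg F f‖ ≤ η := by
  classical
  have hd : 0 < 2 * (‖f‖ + 1) := by positivity
  refine ⟨{g}, η / (2 * (‖f‖ + 1)), by positivity, fun F hF hFol => ?_⟩
  rw [folnerInv_iff] at hFol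
  have hc : (0 : ℝ) < F.card := by exact_mod_cast hF.card_pos
  have e1 : ∑ s ∈ F, gtr s (gtr g f) = ∑ t ∈ F.image (fun s => g * s), gtr t f := by
    rw [Finset.sum_image (fun a _ b _ h => mul_left_cancel h)]
    exact Finset.sum_congr rfl fun s _ => gtr_gtr s g f
  have hcard : (F.image (fun s => g * s)).card = F.card :=
    Finset.card_image_of_injective _ (mul_right_injective g)
  set I := F.image (fun s => g * s) with hI
  have e2 : (F.filter fun s => ∀ k ∈ ({g} : Finset G), k * s ∈ F).card ≤ (I ∩ F).card := by
    refine Finset.card_le_card_of_injOn (fun s => g * s) ?_ (mul_right_injective g).injOn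
    intro s hs
    simp only [Finset.coe_filter, Finset.mem_singleton, forall_eq, mem_ofPred_eq] at hs
    simp only [Finset.coe_inter, mem_inter_iff, Finset.mem_coe]
    exact ⟨Finset.mem_image_of_mem _ hs.1, hs.2⟩
  have e3 := Finset.card_sdiff_add_card_inter I F
  have e4 := Finset.card_sdiff_add_card_inter F I
  rw [Finset.inter_comm] at e4
  have e2' : ((F.filter fun s => ∀ k ∈ ({g} : Finset G), k * s ∈ F).card : ℝ) ≤ (I ∩ F).card := by
    exact_mod_cast e2
  have e3' : ((I \ F).card : ℝ) + (I ∩ F).card = F.card := by rw [← hcard]; exact_mod_cast e3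
  have e4' : ((F \ I).card : ℝ) + (I ∩ F).card = F.card := by exact_mod_cast e4
  have e5 : ‖∑ t ∈ I, gtr t f - ∑ t ∈ F, gtr t f‖ ≤
      ((I \ F).card + (F \ I).card) * ‖f‖ := by
    rw [← Finset.sum_sdiff_sub_sum_sdiff]
    refine (norm_sub_le _ _).trans ?_
    rw [add_mul]
    refine add_le_add ?_ ?_
    · exact (norm_sum_le _ _).trans ((Finset.sum_le_sum fun s _ => norm_gtr_le s f).trans
        (by simp))
    · exact (norm_sum_le _ _).trans ((Finset.sum_le_sum fun s _ => norm_gtr_le s f).trans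
        (by simp))
  change ‖avg F (gtr g f) - avg F f‖ ≤ η
  unfold avg
  rw [e1, ← smul_sub, norm_smul, norm_inv, Real.norm_of_nonneg hc.le, inv_mul_le_iff₀ hc]
  refine e5.trans ?_
  have e6 : ((I \ F).card : ℝ) + (F \ I).card ≤ 2 * (η / (2 * (‖f‖ + 1))) * F.card := by
    linarith
  have e7 : 2 * (η / (2 * (‖f‖ + 1))) * (‖f‖ + 1) = η := by field_simp
  calc _ ≤ (2 * (η / (2 * (‖f‖ + 1))) * F.card) * (‖f‖ + 1) := by
        gcongr; linarith
    _ = F.card * (2 * (η / (2 * (‖f‖ + 1))) * (‖f‖ + 1)) := by ring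
    _ = F.card * η := by rw [e7]

theorem avg_hull_close {f u : C(X, ℝ)} (hu : u ∈ orbHull G f) {η : ℝ} (hη : 0 < η) :
    ∀ᶠ F in folF G, ‖avg F u - avg F f‖ ≤ η := by
  have hconv : Convex ℝ {u : C(X, ℝ) | ∀ᶠ F in folF G, ‖avg F u - avg F f‖ ≤ η} := by
    intro u hu v hv a b ha hb hab
    simp only [mem_ofPred_eq] at hu hv ⊢
    filter_upwards [hu, hv] with F h1 h2
    have e : avg F (a • u + b • v) - avg F f
        = a • (avg F u - avg F f) + b • (avg F v - avg F f) := by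
      ext x
      simp only [ContinuousMap.sub_apply, ContinuousMap.add_apply, ContinuousMap.smul_apply,
        avg_apply, smul_eq_mul, Finset.sum_add_distrib, ← Finset.mul_sum]
      have : b = 1 - a := by linarith
      subst this
      ring
    rw [e]
    refine (norm_add_le _ _).trans ?_
    rw [norm_smul, norm_smul, Real.norm_of_nonneg ha, Real.norm_of_nonneg hb]
    calc _ ≤ a * η + b * η := by gcongr
      _ = η := by rw [← add_mul, hab, one_mul]
  exact convexHull_min (by rintro _ ⟨g, rfl⟩; exact avg_gtr_close g f hη) hconv hu

theorem avg_contract {μ : Measure X} [IsProbabilityMeasure μ]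
    (hμ : ∀ g : G, μ.map (fun x => g • x) = μ) {F : Finset G} (hF : F.Nonempty)
    (u : C(X, ℝ)) (c : ℝ) :
    ∫ x, (avg F u x - c) ^ 2 ∂μ ≤ ∫ x, (u x - c) ^ 2 ∂μ := by
  have hc : (0 : ℝ) < F.card := by exact_mod_cast hF.card_pos
  let w : C(X, ℝ) := (u - ContinuousMap.const X c) ^ 2
  have hw : ∀ x, w x = (u x - c) ^ 2 := fun x => rfl
  have h1 : ∀ x, (avg F u x - c) ^ 2 ≤ (F.card : ℝ)⁻¹ * ∑ s ∈ F, gtr s w x := by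
    intro x
    have e : avg F u x - c = (F.card : ℝ)⁻¹ * ∑ s ∈ F, (u (s • x) - c) := by
      rw [avg_apply, Finset.sum_sub_distrib, Finset.sum_const, nsmul_eq_mul]
      field_simp
    rw [e, mul_pow]
    have h2 := sq_sum_le_card_mul_sum_sq (s := F) (f := fun s => u (s • x) - c)
    calc _ ≤ ((F.card : ℝ)⁻¹) ^ 2 * (F.card * ∑ s ∈ F, (u (s • x) - c) ^ 2) := by gcongr
      _ = _ := by
        simp only [gtr_apply, hw]
        field_simp
  calc ∫ x, (avg F u x - c) ^ 2 ∂μ ≤ ∫ x, (F.card : ℝ)⁻¹ * ∑ s ∈ F, gtr s w x ∂μ := by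
        refine integral_mono ?_ ?_ h1
        · exact cm_integrable ((avg F u - ContinuousMap.const X c) ^ 2) μ
        · exact (integrable_finsetSum _ fun s _ => cm_integrable (gtr s w) μ).const_mul _
    _ = ∫ x, w x ∂μ := by
        rw [integral_const_mul, integral_finsetSum _ fun s _ => cm_integrable (gtr s w) μ]
        simp only [integral_gtr hμ]
        rw [Finset.sum_const, nsmul_eq_mul, inv_mul_cancel_left₀ hc.ne']
    _ = _ := rfl

theorem cheb {μ : Measure X} [IsProbabilityMeasure μ] (u : C(X, ℝ)) (c : ℝ) {ε : ℝ} (hε : 0 < ε) :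
    ε ^ 2 * μ.real {x | ε ≤ |u x - c|} ≤ ∫ x, (u x - c) ^ 2 ∂μ := by
  have h := mul_meas_ge_le_integral_of_nonneg (μ := μ) (f := fun x => (u x - c) ^ 2)
    (Eventually.of_forall fun x => sq_nonneg _)
    (cm_integrable ((u - ContinuousMap.const X c) ^ 2) μ) (ε ^ 2)
  have e : {x | ε ≤ |u x - c|} = {x | ε ^ 2 ≤ (u x - c) ^ 2} := by
    ext x
    simp only [mem_ofPred_eq]
    rw [sq_le_sq, abs_of_pos hε]
  rw [e]
  exact h

theorem uniform_avg [Countable G] (hG : AmenableGroup G) (hcpt : IsCompact (EG G X)) (f : C(X, ℝ))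
    {ε : ℝ} (hε : 0 < ε) : ∃ g : C(X, ℝ), ∀ μ ∈ EG G X,
      (μ : Measure X).real {x | ε ≤ |g x - ∫ y, f y ∂(μ : Measure X)|} < ε := by
  have hη : 0 < ε ^ 3 / 5 := by positivity
  have h1 : ∀ μ : ProbabilityMeasure X, ∃ u : C(X, ℝ), μ ∈ EG G X → u ∈ orbHull G f ∧
      ∫ x, (u x - ∫ y, f y ∂(μ : Measure X)) ^ 2 ∂(μ : Measure X) < ε ^ 3 / 5 := by
    intro μ
    by_cases hμ : μ ∈ EG G X
    · obtain ⟨u, hu, hu2⟩ := mean_ergodic (G := G) (μ := (μ : Measure X)) hμ.1 (by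
        intro A hA hinv
        have := hμ.2 A hA hinv
        simpa [ProbabilityMeasure.coeFn_def, ENNReal.toNNReal_eq_one_iff,
          ENNReal.toNNReal_eq_zero_iff, measure_ne_top] using this) f hη
      exact ⟨u, fun _ => ⟨hu, hu2⟩⟩
    · exact ⟨0, fun h => absurd h hμ⟩
  choose u hu using h1
  let vf : C(X, ℝ) → ProbabilityMeasure X → ℝ := fun u ν =>
    ∫ x, (u ^ 2 : C(X, ℝ)) x ∂(ν : Measure X) - (∫ y, f y ∂(ν : Measure X)) ^ 2
  have hvf : ∀ u ∈ orbHull G f, ∀ ν ∈ EG G X,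
      ∫ x, (u x - ∫ y, f y ∂(ν : Measure X)) ^ 2 ∂(ν : Measure X) = vf u ν := by
    intro u hu ν hν
    rw [integral_sq_sub, orbHull_integral hν.1 hu]
    simp only [vf]
    ring
  have hvc : ∀ u, Continuous (vf u) := fun u =>
    (continuous_integral_cm _).sub ((continuous_integral_cm f).pow 2)
  obtain ⟨t, htE, ht⟩ := hcpt.elim_nhds_subcover (fun μ => {ν | vf (u μ) ν < ε ^ 3 / 5}) (by
    intro μ hμ
    refine (isOpen_lt (hvc _) continuous_const).mem_nhds ?_
    rw [mem_ofPred_eq, ← hvf _ (hu μ hμ).1 μ hμ]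
    exact (hu μ hμ).2)
  have := folF_neBot hG
  obtain ⟨F, hF, hFt⟩ := (folF_nonempty.and ((Filter.eventually_all_finset t).2
    fun μ hμ => avg_hull_close (hu μ (htE μ hμ)).1 (half_pos hε))).exists
  refine ⟨avg F f, fun ν hν => ?_⟩
  obtain ⟨μ, hμt, hμν⟩ := mem_iUnion₂.1 (ht hν)
  have hμ := htE μ hμt
  have hmem := (hu μ hμ).1
  have h2 : vf (u μ) ν < ε ^ 3 / 5 := hμν
  rw [← hvf _ hmem ν hν] at h2
  have h3 := (cheb (μ := (ν : Measure X)) (avg F (u μ)) (∫ y, f y ∂(ν : Measure X))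
    (half_pos hε)).trans (avg_contract hν.1 hF _ _)
  have h4 : (ν : Measure X).real {x | ε ≤ |avg F f x - ∫ y, f y ∂(ν : Measure X)|} ≤
      (ν : Measure X).real {x | ε / 2 ≤ |avg F (u μ) x - ∫ y, f y ∂(ν : Measure X)|} := by
    refine measureReal_mono ?_
    intro x hx
    simp only [mem_ofPred_eq] at hx ⊢
    have h5 := (ContinuousMap.norm_coe_le_norm (avg F (u μ) - avg F f) x).trans (hFt μ hμt)
    rw [ContinuousMap.sub_apply, Real.norm_eq_abs, abs_sub_comm] at h5
    have h6 := abs_sub_le (avg F f x) (avg F (u μ) x) (∫ y, f y ∂(ν : Measure X))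
    linarith
  refine lt_of_le_of_lt h4 ?_
  have h7 : (ε / 2) ^ 2 * (ν : Measure X).real
      {x | ε / 2 ≤ |avg F (u μ) x - ∫ y, f y ∂(ν : Measure X)|} < (ε / 2) ^ 2 * ε := by
    have : ε ^ 3 / 5 < (ε / 2) ^ 2 * ε := by nlinarith [pow_pos hε 3]
    linarith
  exact lt_of_mul_lt_mul_left h7 (by positivity)

end Uniform

section StoneW
open Filter Topology
set_option linter.unusedSectionVars false
variable {G : Type*} {X : Type*} [Group G] [MetricSpace X] [MulAction G X]
variable [MeasurableSpace X] [BorelSpace X] [ContinuousConstSMul G X] [CompactSpace X]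

/-- `h` is approximately realized by continuous functions on `X`. -/
def Realized (h : C(↥(EG G X), ℝ)) : Prop :=
  ∀ ε : ℝ, 0 < ε → ∃ f : C(X, ℝ), ∀ μ : ↥(EG G X),
    (μ.1 : Measure X).real {x | ε ≤ |f x - h μ|} < ε

theorem Realized.add {h k : C(↥(EG G X), ℝ)} (hh : Realized h) (hk : Realized k) :
    Realized (h + k) := by
  intro ε hε
  obtain ⟨f, hf⟩ := hh (ε / 2) (half_pos hε)
  obtain ⟨g, hg⟩ := hk (ε / 2) (half_pos hε)
  refine ⟨f + g, fun μ => ?_⟩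
  have : {x | ε ≤ |(f + g) x - (h + k) μ|} ⊆
      {x | ε / 2 ≤ |f x - h μ|} ∪ {x | ε / 2 ≤ |g x - k μ|} := by
    intro x hx
    simp only [mem_ofPred_eq, mem_union, ContinuousMap.add_apply] at hx ⊢
    by_contra! hc
    have := abs_add_le (f x - h μ) (g x - k μ)
    have e : f x + g x - (h μ + k μ) = (f x - h μ) + (g x - k μ) := by ring
    rw [e] at hx
    linarith
  calc _ ≤ _ := measureReal_mono this
    _ ≤ _ := measureReal_union_le _ _
    _ < ε / 2 + ε / 2 := add_lt_add (hf μ) (hg μ)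
    _ = ε := add_halves ε

theorem Realized.mul [CompactSpace ↥(EG G X)] {h k : C(↥(EG G X), ℝ)} (hh : Realized h)
    (hk : Realized k) : Realized (h * k) := by
  intro ε hε
  obtain ⟨η, hη⟩ : ∃ η, η = min 1 (ε / (‖h‖ + ‖k‖ + 2)) := ⟨_, rfl⟩
  have hpos : 0 < ‖h‖ + ‖k‖ + 2 := by positivity
  have hη0 : 0 < η := by rw [hη]; positivity
  have hη1 : η ≤ 1 := by rw [hη]; exact min_le_left _ _
  have hη2 : η * (‖h‖ + ‖k‖ + 2) ≤ ε := by
    rw [← le_div_iff₀ hpos, hη]; exact min_le_right _ _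
  obtain ⟨f, hf⟩ := hh η hη0
  obtain ⟨g, hg⟩ := hk η hη0
  refine ⟨f * g, fun μ => ?_⟩
  have hM := h.norm_coe_le_norm μ
  have hN := k.norm_coe_le_norm μ
  rw [Real.norm_eq_abs] at hM hN
  have h0 := norm_nonneg h
  have h1 := norm_nonneg k
  have : {x | ε ≤ |(f * g) x - (h * k) μ|} ⊆
      {x | η ≤ |f x - h μ|} ∪ {x | η ≤ |g x - k μ|} := by
    intro x hx
    simp only [mem_ofPred_eq, mem_union, ContinuousMap.mul_apply] at hx ⊢
    by_contra! hc
    have e : f x * g x - (h μ * k μ) =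
      (f x - h μ) * k μ + h μ * (g x - k μ) + (f x - h μ) * (g x - k μ) := by ring
    rw [e] at hx
    have t1 := abs_add_le ((f x - h μ) * k μ + h μ * (g x - k μ)) ((f x - h μ) * (g x - k μ))
    have t2 := abs_add_le ((f x - h μ) * k μ) (h μ * (g x - k μ))
    simp only [abs_mul] at t1 t2
    have t3 : |f x - h μ| * |k μ| ≤ η * ‖k‖ := mul_le_mul hc.1.le hN (abs_nonneg _) hη0.le
    have t4 : |h μ| * |g x - k μ| ≤ ‖h‖ * η := mul_le_mul hM hc.2.le (abs_nonneg _) h0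
    have t5 : |f x - h μ| * |g x - k μ| ≤ η * 1 :=
      mul_le_mul hc.1.le (hc.2.le.trans hη1) (abs_nonneg _) hη0.le
    nlinarith
  calc _ ≤ _ := measureReal_mono this
    _ ≤ _ := measureReal_union_le _ _
    _ < η + η := add_lt_add (hf μ) (hg μ)
    _ ≤ ε := by nlinarith

theorem realized_const (c : ℝ) : Realized (ContinuousMap.const (↥(EG G X)) c) := by
  intro ε hε
  refine ⟨ContinuousMap.const X c, fun μ => ?_⟩
  have : {x : X | ε ≤ |(ContinuousMap.const X c) x - ContinuousMap.const (↥(EG G X)) c μ|} = ∅ := by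
    ext x; simp [hε]
  rw [this]
  simpa using hε

theorem realized_all [Countable G] (hG : AmenableGroup G) (hcpt : IsCompact (EG G X))
    (h : C(↥(EG G X), ℝ)) : Realized h := by
  have : CompactSpace ↥(EG G X) := isCompact_iff_compactSpace.1 hcpt
  let L : Subalgebra ℝ C(↥(EG G X), ℝ) :=
    { carrier := {h | Realized h}
      mul_mem' := fun ha hb => ha.mul hb
      add_mem' := fun ha hb => ha.add hb
      algebraMap_mem' := fun c => realized_const c }
  have hsep : L.SeparatesPoints := by
    intro μ ν hne
    have : ∃ f : C(X, ℝ), ∫ x, f x ∂(μ.1 : Measure X) ≠ ∫ x, f x ∂(ν.1 : Measure X) := by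
      by_contra! hc
      exact hne (Subtype.ext (pm_ext hc))
    obtain ⟨f, hf⟩ := this
    refine ⟨_, ⟨⟨fun μ => ∫ x, f x ∂(μ.1 : Measure X),
      (continuous_integral_cm f).comp continuous_subtype_val⟩, ?_, rfl⟩, hf⟩
    intro ε hε
    obtain ⟨g, hg⟩ := uniform_avg (G := G) hG hcpt f hε
    exact ⟨g, fun μ => hg μ.1 μ.2⟩
  have htop := ContinuousMap.subalgebra_topologicalClosure_eq_top_of_separatesPoints L hsep
  have hmem : h ∈ closure (L : Set C(↥(EG G X), ℝ)) := by
    have : h ∈ L.topologicalClosure := by rw [htop]; trivial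
    exact this
  intro ε hε
  obtain ⟨k, hk, hd⟩ := Metric.mem_closure_iff.1 hmem (ε / 2) (half_pos hε)
  obtain ⟨f, hf⟩ := (show Realized k from hk) (ε / 2) (half_pos hε)
  refine ⟨f, fun μ => ?_⟩
  refine lt_of_le_of_lt (measureReal_mono ?_) ((hf μ).trans (half_lt_self hε))
  intro x hx
  simp only [mem_ofPred_eq] at hx ⊢
  rw [dist_eq_norm] at hd
  have h1 := (h - k).norm_coe_le_norm μ
  rw [ContinuousMap.sub_apply, Real.norm_eq_abs, abs_sub_comm] at h1
  have h2 := abs_sub_le (f x) (k μ) (h μ)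
  linarith

end StoneW

section AFMeasure
open Filter Topology
set_option linter.unusedSectionVars false
variable {G : Type*} {X : Type*} [Group G] [MetricSpace X] [MulAction G X]
variable [MeasurableSpace X] [BorelSpace X] [ContinuousConstSMul G X] [CompactSpace X]

theorem measure_le_of_upper {μ : Measure X} [IsProbabilityMeasure μ] {R : Set X} (hR : IsClosed R)
    {f : C(X, ℝ)} (h0 : ∀ x, 0 ≤ f x) (h1 : ∀ x ∈ R, 1 ≤ f x) : μ.real R ≤ ∫ x, f x ∂μ := by
  have h : ∫ x, R.indicator (fun _ => (1 : ℝ)) x ∂μ ≤ ∫ x, f x ∂μ := by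
    refine integral_mono ((integrable_const _).indicator hR.measurableSet) (cm_integrable f μ) ?_
    intro x
    by_cases hx : x ∈ R
    · simpa [hx] using h1 x hx
    · simpa [hx] using h0 x
  rw [integral_indicator_const _ hR.measurableSet] at h
  simpa using h

theorem closed_small (hcpt : IsCompact (EG G X)) {R : Set X} (hR : IsClosed R) {γ : ℝ}
    (h : ∀ μ ∈ EG G X, (μ : Measure X).real R < γ) :
    ∀ μ ∈ MG G X, (μ : Measure X).real R < γ := by
  have h1 : ∃ f : C(X, ℝ), (∀ x, 0 ≤ f x) ∧ (∀ x ∈ R, 1 ≤ f x) ∧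
      ∀ ν ∈ EG G X, ∫ x, f x ∂(ν : Measure X) < γ := by
    refine hcpt.induction_on (p := fun s => ∃ f : C(X, ℝ), (∀ x, 0 ≤ f x) ∧ (∀ x ∈ R, 1 ≤ f x) ∧
      ∀ ν ∈ s, ∫ x, f x ∂(ν : Measure X) < γ) ?_ ?_ ?_ ?_
    · exact ⟨1, fun x => zero_le_one, fun x _ => le_rfl, fun ν hν => absurd hν (notMem_empty ν)⟩
    · rintro s t hst ⟨f, h0, h1, h2⟩
      exact ⟨f, h0, h1, fun ν hν => h2 ν (hst hν)⟩
    · rintro s t ⟨f, h0, h1, h2⟩ ⟨g, h0', h1', h2'⟩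
      refine ⟨f ⊓ g, fun x => le_inf (h0 x) (h0' x), fun x hx => le_inf (h1 x hx) (h1' x hx), ?_⟩
      rintro ν (hν | hν)
      · refine lt_of_le_of_lt (integral_mono (cm_integrable _ _) (cm_integrable f _) ?_) (h2 ν hν)
        intro x; exact inf_le_left
      · refine lt_of_le_of_lt (integral_mono (cm_integrable _ _) (cm_integrable g _) ?_) (h2' ν hν)
        intro x; exact inf_le_right
    · intro μ hμ
      obtain ⟨f, h0, h1, h2⟩ := exists_upper hR (h μ hμ)
      exact ⟨{ν | ∫ x, f x ∂(ν : Measure X) < γ}, mem_nhdsWithin_of_mem_nhds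
        ((isOpen_lt (continuous_integral_cm f) continuous_const).mem_nhds h2),
        f, h0, h1, fun ν hν => hν⟩
  obtain ⟨f, h0, h1, h2⟩ := h1
  intro μ hμ
  exact lt_of_le_of_lt (measure_le_of_upper hR h0 h1) (bauer_max f γ h2 μ hμ)

/-- cut-down base -/
def cutBase (f : C(X, ℝ)) (c : ℝ) (S : Finset G) (V : Set X) : Set X :=
  V ∩ ⋂ s ∈ S, {x | |f (s • x) - c| < 1 / 3}

theorem cutBase_open (f : C(X, ℝ)) (c : ℝ) (S : Finset G) {V : Set X} (hV : IsOpen V) :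
    IsOpen (cutBase f c S V) := by
  refine hV.inter (isOpen_biInter_finset fun s _ => ?_)
  exact isOpen_lt (((f.continuous.comp (continuous_const_smul s)).sub continuous_const).abs)
    continuous_const

theorem cutBase_closure (f : C(X, ℝ)) (c : ℝ) (S : Finset G) {V : Set X} {x : X}
    (hx : x ∈ closure (cutBase f c S V)) :
    x ∈ closure V ∧ ∀ s ∈ S, |f (s • x) - c| ≤ 1 / 3 := by
  refine ⟨closure_mono inter_subset_left hx, fun s hs => ?_⟩
  have hcl : IsClosed {x : X | |f (s • x) - c| ≤ 1 / 3} :=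
    isClosed_le (((f.continuous.comp (continuous_const_smul s)).sub continuous_const).abs)
      continuous_const
  refine (closure_minimal ?_ hcl) hx
  intro y hy
  have h : |f (s • y) - c| < 1 / 3 := mem_iInter₂.1 hy.2 s hs
  exact h.le

theorem glue_inj {n : ℕ} {N : Fin n → ℕ} {S : ∀ j, Fin (N j) → Finset G}
    {V : ∀ j, Fin (N j) → Set X} (hinj : ∀ j, CastleInj (S j) (fun i => closure (V j i)))
    (f : C(X, ℝ)) :
    CastleInj (ι := Σ j, Fin (N j)) (fun p => S p.1 p.2)
      (fun p => closure (cutBase f (p.1 : ℕ) (S p.1 p.2) (V p.1 p.2))) := by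
  rintro ⟨j, i⟩ ⟨j', i'⟩ s hs t ht x hx y hy hxy
  have hx := cutBase_closure _ _ _ hx
  have hy := cutBase_closure _ _ _ hy
  have h1 := hx.2 s hs
  have h2 := hy.2 t ht
  rw [← hxy] at h2
  have h3 : j = j' := by
    simp only at h1 h2
    rw [abs_le] at h1 h2
    have a1 : ((j : ℕ) : ℝ) < (j' : ℕ) + 1 := by linarith
    have a2 : ((j' : ℕ) : ℝ) < (j : ℕ) + 1 := by linarith
    have b1 : (j : ℕ) < (j' : ℕ) + 1 := by exact_mod_cast a1
    have b2 : (j' : ℕ) < (j : ℕ) + 1 := by exact_mod_cast a2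
    exact Fin.ext (by omega)
  subst h3
  obtain ⟨h4, h5⟩ := hinj j i i' s hs t ht x hx.1 y hy.1 hxy
  subst h4
  exact ⟨rfl, h5⟩

theorem cut_remainder {μ : Measure X} [IsProbabilityMeasure μ]
    (hμ : ∀ g : G, μ.map (fun x => g • x) = μ) {N : ℕ} (S : Fin N → Finset G)
    (V : Fin N → Set X) (f : C(X, ℝ)) (c : ℝ) (T : Finset G)
    (hT : ∀ i, ∀ s ∈ S i, ∀ t ∈ S i, t * s⁻¹ ∈ T) :
    μ.real (univ \ ⋃ i, ⋃ s ∈ S i, s • cutBase f c (S i) (V i)) ≤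
      μ.real (univ \ ⋃ i, ⋃ s ∈ S i, s • V i) + T.card * μ.real {x | 1 / 3 ≤ |f x - c|} := by
  have hB : MeasurableSet {x : X | 1 / 3 ≤ |f x - c|} :=
    (isClosed_le continuous_const ((f.continuous.sub continuous_const).abs)).measurableSet
  have hsub : (univ \ ⋃ i, ⋃ s ∈ S i, s • cutBase f c (S i) (V i)) ⊆
      (univ \ ⋃ i, ⋃ s ∈ S i, s • V i) ∪
        ⋃ r ∈ T, (fun x => r • x) ⁻¹' {x : X | 1 / 3 ≤ |f x - c|} := by
    intro x hx
    by_cases hxV : x ∈ ⋃ i, ⋃ s ∈ S i, s • V i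
    · right
      simp only [mem_iUnion] at hxV
      obtain ⟨i, s, hs, v, hv, rfl⟩ := hxV
      have h1 : v ∉ cutBase f c (S i) (V i) := by
        intro h
        apply hx.2
        simp only [mem_iUnion]
        exact ⟨i, s, hs, v, h, rfl⟩
      have h2 : ∃ t ∈ S i, 1 / 3 ≤ |f (t • v) - c| := by
        by_contra! hc
        exact h1 ⟨hv, mem_iInter₂.2 fun t ht => hc t ht⟩
      obtain ⟨t, ht, h3⟩ := h2
      refine mem_iUnion₂.2 ⟨t * s⁻¹, hT i s hs t ht, ?_⟩
      simp only [mem_preimage, mem_ofPred_eq]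
      rwa [smul_smul, inv_mul_cancel_right]
    · exact Or.inl ⟨trivial, hxV⟩
  refine (measureReal_mono hsub).trans ((measureReal_union_le _ _).trans ?_)
  gcongr
  refine (measureReal_biUnion_finset_le _ _).trans ?_
  simp only [real_preimage hμ _ hB]
  simp

theorem castle_union_open {ι : Type*} {S : ι → Finset G} {V : ι → Set X} (hV : ∀ i, IsOpen (V i)) :
    IsOpen (⋃ i, ⋃ s ∈ S i, s • V i) :=
  isOpen_iUnion fun i => isOpen_biUnion fun s _ => (hV i).smul s

set_option maxHeartbeats 1000000 in
theorem af_measure [Countable G] (hG : AmenableGroup G) (hfree : FreeAction G X)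
    (hcpt : IsCompact (EG G X)) (hzd : IsTotallyDisconnected (EG G X))
    (K : Finset G) {δ : ℝ} (hδ : 0 < δ) (hδ1 : δ ≤ 1) {γ : ℝ} (hγ : 0 < γ) :
    ∃ (ι : Type) (_ : Fintype ι) (S : ι → Finset G) (V : ι → Set X), (∀ i, IsOpen (V i)) ∧
      CastleInj S (fun i => closure (V i)) ∧ (∀ i, FolnerInv G K δ (S i)) ∧
      (∀ i, ∀ s ∈ S i, Metric.diam (s • closure (V i)) < δ) ∧
      ∀ μ ∈ MG G X, (μ : Measure X).real (univ \ ⋃ i, ⋃ s ∈ S i, s • V i) < γ := by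
  classical
  have hγ2 : 0 < γ / 2 := half_pos hγ
  have : CompactSpace ↥(EG G X) := isCompact_iff_compactSpace.1 hcpt
  have : TotallyDisconnectedSpace ↥(EG G X) := totallyDisconnectedSpace_subtype_iff.2 hzd
  have h1 : ∀ e : ↥(EG G X), ∃ N, ∃ (S : Fin N → Finset G) (V : Fin N → Set X),
      ((∀ i, IsOpen (V i)) ∧
      CastleInj S (fun i => closure (V i)) ∧ (∀ i, FolnerInv G K δ (S i)) ∧
      (∀ i, ∀ s ∈ S i, Metric.diam (s • closure (V i)) < δ)) ∧
      ∃ f : C(X, ℝ), (∀ x, 0 ≤ f x) ∧ (∀ x ∈ univ \ ⋃ i, ⋃ s ∈ S i, s • V i, 1 ≤ f x) ∧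
        ∫ x, f x ∂(e.1 : Measure X) < γ / 2 := by
    intro e
    obtain ⟨N, S, V, hV, hinj, hF, hd, hm⟩ :=
      open_castle (μ := (e.1 : Measure X)) hG hfree e.2.1 K hδ hδ1 hγ2
    refine ⟨N, S, V, ⟨hV, hinj, hF, hd⟩, ?_⟩
    have ho : IsOpen (⋃ i, ⋃ s ∈ S i, s • V i) := castle_union_open hV
    refine exists_upper (isClosed_univ.sdiff ho) ?_
    rw [← compl_eq_univ_sdiff, probReal_compl_eq_one_sub ho.measurableSet]
    linarith
  choose N S V hcas f hf0 hf1 hfint using h1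
  let O : ↥(EG G X) → TopologicalSpace.Opens ↥(EG G X) := fun e =>
    ⟨{ν | ∫ x, f e x ∂(ν.1 : Measure X) < γ / 2},
      isOpen_lt ((continuous_integral_cm (f e)).comp continuous_subtype_val) continuous_const⟩
  have hO : TopologicalSpace.IsOpenCover O := by
    refine TopologicalSpace.IsOpenCover.mk ?_
    rw [eq_top_iff]
    intro e _
    exact TopologicalSpace.Opens.mem_iSup.2 ⟨e, hfint e⟩
  obtain ⟨n, W, hW, hWu, hWd⟩ := hO.exists_finite_nonempty_disjoint_clopen_cover
  have hW' : ∀ j, ∃ i, (W j : Set ↥(EG G X)) ⊆ O i := fun j => (hW j).2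
  choose e he using hW'
  have hidx : ∀ μ : ↥(EG G X), ∃ j, μ ∈ W j := fun μ => by
    simpa using hWu (mem_univ μ)
  choose idx hidx using hidx
  have huniq : ∀ μ : ↥(EG G X), ∀ j, μ ∈ W j → idx μ = j := by
    intro μ j hj
    by_contra hne
    have h2 := hWd hne
    have h3 : (W (idx μ) ⊓ W j : TopologicalSpace.Clopens ↥(EG G X)) = ⊥ := h2.eq_bot
    have h4 : μ ∈ (W (idx μ) ⊓ W j : TopologicalSpace.Clopens ↥(EG G X)) := ⟨hidx μ, hj⟩
    rw [h3] at h4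
    exact h4
  let h : C(↥(EG G X), ℝ) := ⟨fun μ => ((idx μ : ℕ) : ℝ), by
    refine continuous_iff_continuousAt.2 fun μ => ?_
    have : (fun ν => ((idx ν : ℕ) : ℝ)) =ᶠ[𝓝 μ] fun _ => ((idx μ : ℕ) : ℝ) := by
      filter_upwards [(W (idx μ)).isClopen.isOpen.mem_nhds (hidx μ)] with ν hν
      rw [huniq ν (idx μ) hν]
    exact (continuousAt_const).congr this.symm⟩
  obtain ⟨T, hT⟩ : ∃ T : Fin n → Finset G, ∀ j i, ∀ s ∈ S (e j) i, ∀ t ∈ S (e j) i,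
      t * s⁻¹ ∈ T j := by
    refine ⟨fun j => Finset.univ.biUnion fun i => (S (e j) i) * (S (e j) i)⁻¹, ?_⟩
    intro j i s hs t ht
    exact Finset.mem_biUnion.2 ⟨i, Finset.mem_univ _,
      Finset.mul_mem_mul ht (Finset.inv_mem_inv hs)⟩
  obtain ⟨M, hM⟩ : ∃ M : ℝ, M = ∑ j, ((T j).card : ℝ) := ⟨_, rfl⟩
  have hM0 : 0 ≤ M := by rw [hM]; exact Finset.sum_nonneg fun _ _ => Nat.cast_nonneg _
  have hTM : ∀ j, ((T j).card : ℝ) ≤ M := fun j => by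
    rw [hM]
    exact Finset.single_le_sum (f := fun j => ((T j).card : ℝ)) (fun _ _ => Nat.cast_nonneg _)
      (Finset.mem_univ j)
  obtain ⟨ε, hε⟩ : ∃ ε : ℝ, ε = min (1 / 3) (γ / 2 / (M + 1)) := ⟨_, rfl⟩
  have hε0 : 0 < ε := by 
    rw [hε]; exact lt_min (by norm_num) (div_pos hγ2 (by linarith))
  have hε1 : ε ≤ 1 / 3 := by rw [hε]; exact min_le_left _ _
  have hε2 : (M + 1) * ε ≤ γ / 2 := by
    rw [mul_comm, ← le_div_iff₀ (by linarith), hε]; exact min_le_right _ _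
  obtain ⟨F, hF⟩ := realized_all hG hcpt h ε hε0
  have hop : ∀ p : Σ j, Fin (N (e j)),
      IsOpen (cutBase F (p.1 : ℕ) (S (e p.1) p.2) (V (e p.1) p.2)) :=
    fun p => cutBase_open _ _ _ ((hcas (e p.1)).1 p.2)
  have hcl : IsClosed (univ \ ⋃ p : Σ j, Fin (N (e j)), ⋃ s ∈ S (e p.1) p.2,
      s • cutBase F (p.1 : ℕ) (S (e p.1) p.2) (V (e p.1) p.2)) :=
    isClosed_univ.sdiff (castle_union_open (S := fun p : Σ j, Fin (N (e j)) => S (e p.1) p.2)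
      (V := fun p : Σ j, Fin (N (e j)) =>
        cutBase F (p.1 : ℕ) (S (e p.1) p.2) (V (e p.1) p.2)) hop)
  refine ⟨Σ j, Fin (N (e j)), inferInstance, fun p => S (e p.1) p.2,
    fun p => cutBase F (p.1 : ℕ) (S (e p.1) p.2) (V (e p.1) p.2), ?_, ?_, ?_, ?_, ?_⟩
  · exact hop
  · exact glue_inj (S := fun j => S (e j)) (V := fun j => V (e j)) (fun j => (hcas (e j)).2.1) F
  · exact fun p => (hcas (e p.1)).2.2.1 p.2
  · intro p s hs
    refine lt_of_le_of_lt (Metric.diam_mono ?_ Metric.isBounded_of_compactSpace)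
      ((hcas (e p.1)).2.2.2 p.2 s hs)
    exact smul_set_mono (closure_mono inter_subset_left)
  · refine closed_small hcpt hcl ?_
    intro μ hμ
    obtain ⟨j, hj⟩ : ∃ j, j = idx ⟨μ, hμ⟩ := ⟨_, rfl⟩
    have hmj : (⟨μ, hμ⟩ : ↥(EG G X)) ∈ W j := hj ▸ hidx _
    have hsub : (univ \ ⋃ p : Σ j, Fin (N (e j)), ⋃ s ∈ S (e p.1) p.2,
        s • cutBase F (p.1 : ℕ) (S (e p.1) p.2) (V (e p.1) p.2)) ⊆
        univ \ ⋃ i, ⋃ s ∈ S (e j) i, s • cutBase F (j : ℕ) (S (e j) i) (V (e j) i) := by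
      refine sdiff_subset_sdiff_right ?_
      intro x hx
      obtain ⟨i, hi⟩ := mem_iUnion.1 hx
      exact mem_iUnion.2 ⟨⟨j, i⟩, hi⟩
    have a1 := cut_remainder (μ := (μ : Measure X)) hμ.1 (S (e j)) (V (e j)) F (j : ℕ) (T j) (hT j)
    have a2 : (μ : Measure X).real (univ \ ⋃ i, ⋃ s ∈ S (e j) i, s • V (e j) i) < γ / 2 :=
      lt_of_le_of_lt (measure_le_of_upper (isClosed_univ.sdiff
        (castle_union_open (hcas (e j)).1)) (hf0 _) (hf1 _)) (he j hmj)
    have a3 : (μ : Measure X).real {x | 1 / 3 ≤ |F x - (j : ℕ)|} ≤ ε := by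
      refine le_trans (measureReal_mono ?_) (hF ⟨μ, hμ⟩).le
      intro x hx
      simp only [mem_ofPred_eq] at hx ⊢
      have : h ⟨μ, hμ⟩ = ((j : ℕ) : ℝ) := by rw [hj]; rfl
      rw [this]
      linarith
    have a4 := (measureReal_mono (μ := (μ : Measure X)) hsub).trans a1
    have a5 : ((T j).card : ℝ) * (μ : Measure X).real {x | 1 / 3 ≤ |F x - (j : ℕ)|} ≤ M * ε :=
      mul_le_mul (hTM j) a3 measureReal_nonneg hM0
    linarith

end AFMeasure

section Final
open Filter Topology
set_option linter.unusedSectionVars false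
variable {G : Type*} {X : Type*} [Group G] [MetricSpace X] [MulAction G X]
variable [MeasurableSpace X] [BorelSpace X] [ContinuousConstSMul G X] [CompactSpace X]

theorem af_measure_fin [Countable G] (hG : AmenableGroup G) (hfree : FreeAction G X)
    (hcpt : IsCompact (EG G X)) (hzd : IsTotallyDisconnected (EG G X))
    (K : Finset G) {δ : ℝ} (hδ : 0 < δ) (hδ1 : δ ≤ 1) {γ : ℝ} (hγ : 0 < γ) :
    ∃ (I : ℕ) (S : Fin I → Finset G) (V : Fin I → Set X), (∀ i, IsOpen (V i)) ∧
      CastleInj S (fun i => closure (V i)) ∧ (∀ i, FolnerInv G K δ (S i)) ∧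
      (∀ i, ∀ s ∈ S i, Metric.diam (s • closure (V i)) < δ) ∧
      ∀ μ ∈ MG G X, (μ : Measure X).real (univ \ ⋃ i, ⋃ s ∈ S i, s • V i) < γ := by
  obtain ⟨ι, _, S, V, hV, hinj, hF, hd, hm⟩ := af_measure hG hfree hcpt hzd K hδ hδ1 hγ
  let e := (Fintype.equivFin ι).symm
  refine ⟨Fintype.card ι, fun i => S (e i), fun i => V (e i), fun i => hV _, ?_, fun i => hF _,
    fun i => hd _, ?_⟩
  · intro i j s hs t ht x hx y hy hxy
    obtain ⟨h1, h2⟩ := hinj (e i) (e j) s hs t ht x hx y hy hxy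
    exact ⟨e.injective h1, h2⟩
  · have : (⋃ i, ⋃ s ∈ S (e i), s • V (e i)) = ⋃ i, ⋃ s ∈ S i, s • V i :=
      e.surjective.iUnion_comp (fun i => ⋃ s ∈ S i, s • V i)
    rw [this]
    exact hm

theorem subordinate_of_fintype {ι : Type*} [Fintype ι] {F O : Set X} (U : ι → Set X) (s : ι → G)
    (hU : ∀ k, IsOpen (U k)) (hF : F ⊆ ⋃ k, U k) (hO : ∀ k, s k • U k ⊆ O)
    (hd : ∀ k l, k ≠ l → Disjoint (s k • U k) (s l • U l)) : SubordinateM G X 0 F O := by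
  let e := (Fintype.equivFin ι).symm
  refine ⟨Fintype.card ι, fun i => U (e i), fun i => s (e i), fun _ => 0, fun i => hU _, ?_,
    fun i => hO _, fun k l hkl _ => hd _ _ (fun h => hkl (e.injective h))⟩
  rw [e.surjective.iUnion_comp U]
  exact hF

theorem exists_phi (S : Finset G) (m q : ℕ) (h : (m + 1) * q ≤ S.card) :
    ∃ φ : Fin (m + 1) → Fin q → G, (∀ c a, φ c a ∈ S) ∧
      ∀ c a c' a', φ c a = φ c' a' → c = c' ∧ a = a' := by
  have : Nonempty (Fin (m + 1) × Fin q ↪ S) := by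
    refine Function.Embedding.nonempty_of_card_le ?_
    simpa using h
  obtain ⟨ψ⟩ := this
  refine ⟨fun c a => ψ (c, a), fun c a => (ψ (c, a)).2, fun c a c' a' h => ?_⟩
  have := ψ.injective (Subtype.ext h)
  exact ⟨congrArg Prod.fst this, congrArg Prod.snd this⟩

theorem color_collapse {I m : ℕ} {S : Fin I → Finset G} {V : Fin I → Set X}
    (hV : ∀ i, IsOpen (V i)) (hinj : CastleInj S V) (q : Fin I → ℕ)
    (φ : ∀ i, Fin (m + 1) → Fin (q i) → G) (hφ : ∀ i c a, φ i c a ∈ S i)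
    (hφi : ∀ i c a c' a', φ i c a = φ i c' a' → c = c' ∧ a = a') {R : Set X}
    (hR : SubordinateM G X m R (⋃ i, ⋃ a, φ i 0 a • V i)) :
    SubordinateM G X 0 R (⋃ i, ⋃ c, ⋃ a, φ i c a • V i) := by
  obtain ⟨N, U, s, c, hU, hRU, hsU, hd⟩ := hR
  refine subordinate_of_fintype (ι := Fin N × Σ i, Fin (q i))
    (fun p => U p.1 ∩ (fun x => s p.1 • x) ⁻¹' (φ p.2.1 0 p.2.2 • V p.2.1))
    (fun p => φ p.2.1 (c p.1) p.2.2 * (φ p.2.1 0 p.2.2)⁻¹ * s p.1) ?_ ?_ ?_ ?_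
  · intro p
    exact (hU _).inter (((hV _).smul _).preimage (continuous_const_smul _))
  · intro x hx
    obtain ⟨k, hk⟩ := mem_iUnion.1 (hRU hx)
    have h1 := hsU k (smul_mem_smul_set hk)
    simp only [mem_iUnion] at h1
    obtain ⟨i, a, h1⟩ := h1
    exact mem_iUnion.2 ⟨(k, ⟨i, a⟩), hk, h1⟩
  · rintro ⟨k, i, a⟩ _ ⟨x, ⟨hx, v, hv, hvx⟩, rfl⟩
    simp only [mem_iUnion]
    refine ⟨i, c k, a, v, hv, ?_⟩
    simp only at hvx ⊢
    rw [mul_smul, ← hvx, smul_smul, inv_mul_cancel_right]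
  · rintro ⟨k, i, a⟩ ⟨l, j, b⟩ hne
    refine Set.disjoint_left.2 ?_
    rintro _ ⟨x, ⟨hx, v, hv, hvx⟩, rfl⟩ ⟨y, ⟨hy, w, hw, hwy⟩, hxy⟩
    simp only at hvx hwy hxy hx hy
    have ex : (φ i (c k) a * (φ i 0 a)⁻¹ * s k) • x = φ i (c k) a • v := by
      rw [mul_smul, ← hvx, smul_smul, inv_mul_cancel_right]
    have ey : (φ j (c l) b * (φ j 0 b)⁻¹ * s l) • y = φ j (c l) b • w := by
      rw [mul_smul, ← hwy, smul_smul, inv_mul_cancel_right]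
    rw [ex, ey] at hxy
    obtain ⟨h1, h2⟩ := hinj j i _ (hφ j (c l) b) _ (hφ i (c k) a) w hw v hv hxy
    subst h1
    obtain ⟨h3, h4⟩ := hφi _ _ _ _ _ h2
    subst h4
    rw [h3] at hxy
    have h5 : w = v := smul_left_cancel _ hxy
    subst h5
    by_cases hkl : k = l
    · subst hkl
      exact hne rfl
    · refine (Set.disjoint_left.1 (hd k l hkl h3.symm)) (smul_mem_smul_set hx) ?_
      rw [← hvx, hwy]
      exact smul_mem_smul_set hy

theorem main_aux [Countable G] [Infinite G]
    (hG : AmenableGroup G) (hfree : FreeAction G X)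
    (hcpt : IsCompact (EG G X)) (hzd : IsTotallyDisconnected (EG G X))
    (m : ℕ) (hcomp : HasMComparison G X m) : MAlmostFinite G X 0 := by
  classical
  intro n hn K δ hδ
  have hp0 : 0 < n * (m + 1) := by positivity
  obtain ⟨p, hp⟩ : ∃ p, p = n * (m + 1) := ⟨_, rfl⟩
  rw [← hp] at hp0
  obtain ⟨K', hKK', hK'⟩ := Infinite.exists_superset_card_eq K (K.card + p) (by omega)
  have hδ' : 0 < min δ (1 / 2) := lt_min hδ (by norm_num)
  have hδ2 : min δ (1 / 2) < 1 := lt_of_le_of_lt (min_le_right _ _) (by norm_num)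
  have hpr : (0 : ℝ) < p := by exact_mod_cast hp0
  obtain ⟨γ, hγ⟩ : ∃ γ : ℝ, γ = 1 / (2 * p + 1) := ⟨_, rfl⟩
  have hγ0 : 0 < γ := by rw [hγ]; positivity
  have hγ1 : 2 * p * γ = 1 - γ := by rw [hγ]; field_simp; ring
  obtain ⟨I, S, V, hV, hinj, hF, hd, hm⟩ :=
    af_measure_fin (X := X) hG hfree hcpt hzd K' hδ' hδ2.le hγ0
  have hinj' : CastleInj S V := fun i j s hs t ht x hx y hy hxy =>
    hinj i j s hs t ht x (subset_closure hx) y (subset_closure hy) hxy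
  obtain ⟨q, hq⟩ : ∃ q : Fin I → ℕ, ∀ i, q i = (S i).card / p := ⟨_, fun _ => rfl⟩
  have hq1 : ∀ i, p * q i ≤ (S i).card := fun i => by
    rw [hq]; exact Nat.mul_div_le _ _
  have hq2 : ∀ i, (S i).card ≤ 2 * p * q i := by
    intro i
    rcases (S i).eq_empty_or_nonempty with h | h
    · simp [h]
    · have h1 := (hF i).card_le hδ2 h
      have h2 : 1 ≤ q i := by
        rw [hq, Nat.one_le_div_iff hp0]; omega
      have h3 := Nat.lt_mul_div_succ (S i).card hp0
      rw [← hq] at h3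
      nlinarith
  have hphi : ∀ i, ∃ φ : Fin (m + 1) → Fin (q i) → G, (∀ c a, φ c a ∈ S i) ∧
      ∀ c a c' a', φ c a = φ c' a' → c = c' ∧ a = a' := fun i => by
    refine exists_phi (S i) m (q i) (le_trans ?_ (hq1 i))
    rw [hp]
    exact Nat.mul_le_mul_right _ (Nat.le_mul_of_pos_left _ hn)
  choose φ hφ hφi using hphi
  have hcas : ∀ S : Fin I → Finset G, (⋃ i, (S i : Set G) • V i) = ⋃ i, ⋃ s ∈ S i, s • V i := by
    intro S
    refine iUnion_congr fun i => ?_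
    rw [← Set.iUnion_smul_set]
    simp
  have hOopen : IsOpen (⋃ i, ⋃ a, φ i 0 a • V i) :=
    isOpen_iUnion fun i => isOpen_iUnion fun a => (hV i).smul _
  have hun : IsOpen (⋃ i, ⋃ s ∈ S i, s • V i) := castle_union_open hV
  have hsub : SubordinateM G X m (univ \ ⋃ i, ⋃ s ∈ S i, s • V i) (⋃ i, ⋃ a, φ i 0 a • V i) := by
    refine hcomp _ _ (isClosed_univ.sdiff hun) hOopen ?_
    intro μ hμ
    have h1 := hm μ hμ
    have h2 : (μ : Measure X).real (⋃ i, ⋃ a, φ i 0 a • V i) =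
        ∑ i, (q i : ℝ) * (μ : Measure X).real (V i) := by
      have e1 : (⋃ i, ⋃ a, φ i 0 a • V i) =
          ⋃ i, ⋃ s ∈ Finset.univ.image (φ i 0), s • V i := by
        refine iUnion_congr fun i => ?_
        simp
      rw [e1, castle_measure (μ := (μ : Measure X)) hμ (fun i => (hV i).measurableSet)]
      · refine Finset.sum_congr rfl fun i _ => ?_
        rw [Finset.card_image_of_injective _ (fun a b hab => (hφi i 0 a 0 b hab).2)]
        simp
      · intro i j s hs t ht
        obtain ⟨a, -, rfl⟩ := Finset.mem_image.1 hs
        obtain ⟨b, -, rfl⟩ := Finset.mem_image.1 ht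
        exact hinj' i j _ (hφ _ _ _) _ (hφ _ _ _)
    have h3 := castle_measure (μ := (μ : Measure X)) hμ (fun i => (hV i).measurableSet) hinj'
    have h4 : ∑ i, ((S i).card : ℝ) * (μ : Measure X).real (V i) ≤
        2 * p * ∑ i, (q i : ℝ) * (μ : Measure X).real (V i) := by
      rw [Finset.mul_sum]
      refine Finset.sum_le_sum fun i _ => ?_
      rw [← mul_assoc]
      refine mul_le_mul_of_nonneg_right ?_ measureReal_nonneg
      exact_mod_cast hq2 i
    rw [← h2, ← h3] at h4
    have h5 : (μ : Measure X).real (univ \ ⋃ i, ⋃ s ∈ S i, s • V i) =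
        1 - (μ : Measure X).real (⋃ i, ⋃ s ∈ S i, s • V i) := by
      rw [← compl_eq_univ_sdiff, probReal_compl_eq_one_sub hun.measurableSet]
    have h6 : (μ : Measure X).real (univ \ ⋃ i, ⋃ s ∈ S i, s • V i) <
        (μ : Measure X).real (⋃ i, ⋃ a, φ i 0 a • V i) := by
      have h7 : 2 * (p : ℝ) * γ < 2 * p * (μ : Measure X).real (⋃ i, ⋃ a, φ i 0 a • V i) := by
        linarith
      exact h1.trans (lt_of_mul_lt_mul_left h7 (by positivity))
    exact_mod_cast h6
  refine ⟨I, S, V, fun _ => 0, fun i => Finset.univ.image fun z : Fin (m + 1) × Fin (q i) =>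
    φ i z.1 z.2, hV, ?_, ?_, ?_, ?_, ?_, ?_, ?_⟩
  · intro i s hs t ht hst
    refine Set.disjoint_left.2 ?_
    rintro _ ⟨x, hx, rfl⟩ ⟨y, hy, hxy⟩
    exact hst (hinj i i s hs t ht x hx y hy hxy.symm).2
  · exact fun i => (hF i).mono hKK' (min_le_left _ _)
  · exact fun i s hs => (hd i s hs).trans_le (min_le_left _ _)
  · intro i j hij _
    refine Set.disjoint_left.2 ?_
    rintro _ ⟨s, hs, x, hx, rfl⟩ ⟨t, ht, y, hy, hxy⟩
    exact hij (hinj i j s hs t ht x hx y hy hxy.symm).1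
  · intro i g hg
    obtain ⟨z, -, rfl⟩ := Finset.mem_image.1 hg
    exact hφ _ _ _
  · intro i
    have hnr : (0 : ℝ) < n := by exact_mod_cast hn
    rw [le_div_iff₀ hnr]
    have h1 := Finset.card_image_le (s := (Finset.univ : Finset (Fin (m + 1) × Fin (q i))))
      (f := fun z => φ i z.1 z.2)
    simp only [Finset.card_univ, Fintype.card_prod, Fintype.card_fin] at h1
    have h2 := hq1 i
    rw [hp] at h2
    have h3 : (Finset.univ.image fun z : Fin (m + 1) × Fin (q i) => φ i z.1 z.2).card * n ≤
        (S i).card := by nlinarith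
    exact_mod_cast h3
  · rw [hcas, hcas]
    have := color_collapse hV hinj' q φ hφ hφi hsub
    convert this using 2
    funext i
    ext x
    simp

end Final

/-- With `E_G(X)` compact and zero-dimensional, dynamical `m`-comparison for
some `m` implies that the minimal free action is almost finite (i.e. `0`-almost finite). -/
theorem almostFinite_of_mComparison
    {G X : Type*} [Group G] [Countable G] [Infinite G]
    [MetricSpace X] [CompactSpace X] [Infinite X]
    [MeasurableSpace X] [BorelSpace X]
    [MulAction G X] [ContinuousConstSMul G X]
    (hG : AmenableGroup G)
    (hfree : FreeAction G X) (hmin : MinimalAction G X)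
    (hcpt : IsCompact (EG G X)) (hzd : IsTotallyDisconnected (EG G X))
    (m : ℕ) (hcomp : HasMComparison G X m) :
    MAlmostFinite G X 0 := by
  exact main_aux hG hfree hcpt hzd m hcomp
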